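/- Fix ε ∈ (0, 0.5) and a compound-dispersion DMC W with V_min > 0, and set β := √(V_min/V_max) < 1. Define f(α) := ε(α − 1) − (1 − β)·φ(2√2·Φ^{-1}(αε))·(1/√(2π) − φ(√2·Φ^{-1}(αε))). Then there exists α with 1 < α < 1/(2ε) such that f(α) < 0, and for any such α, liminf_{n→∞} (log M*_fb(n, ε) − nC)/√n ≥ √(V_ε)·Φ^{-1}(αε) > √(V_ε)·Φ^{-1}(ε). -/

import Mathlib

open MeasureTheory Real Filter Set
open scoped BigOperators ENNReal Classical

noncomputable section

namespace Paper

variable {X Y : Type*} [Fintype X] [Fintype Y]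

/-- `P` is a probability mass function on the finite alphabet `X`. -/
def IsDist (P : X → ℝ) : Prop := (∀ x, 0 ≤ P x) ∧ ∑ x, P x = 1

/-- `W` is a discrete memoryless channel (a stochastic matrix). -/
def IsChannel (W : X → Y → ℝ) : Prop := ∀ x, IsDist (W x)

/-- `W` has no all-zero column. -/
def NoZeroColumn (W : X → Y → ℝ) : Prop := ∀ y, ∃ x, 0 < W x y

/-- Output distribution induced by input distribution `P` through `W`. -/
def outDist (P : X → ℝ) (W : X → Y → ℝ) (y : Y) : ℝ := ∑ x, P x * W x y

/-- Mutual information `I(P; W)` (in nats). -/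
def mutInfo (P : X → ℝ) (W : X → Y → ℝ) : ℝ :=
  ∑ x, ∑ y, P x * W x y * Real.log (W x y / outDist P W y)

/-- Shannon capacity `C`. -/
def capacity (W : X → Y → ℝ) : ℝ :=
  sSup {c | ∃ P, IsDist P ∧ mutInfo P W = c}

/-- The set of capacity-achieving input distributions `Π*`. -/
def capacityAchievers (W : X → Y → ℝ) : Set (X → ℝ) :=
  {P | IsDist P ∧ mutInfo P W = capacity W}

/-- The (unique) capacity-achieving output distribution `q*`. -/
def qStar (W : X → Y → ℝ) : Y → ℝ :=
  if h : (capacityAchievers W).Nonempty then outDist h.choose W else fun _ => 0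

/-- The information density `i*(x,y) = log (W(y|x)/q*(y))`. -/
def iStar (W : X → Y → ℝ) (x : X) (y : Y) : ℝ := Real.log (W x y / qStar W y)

/-- `ν_x = Var[i*(x,Y)]`, `Y ~ W(·|x)`. -/
def nu (W : X → Y → ℝ) (x : X) : ℝ :=
  ∑ y, W x y * (iStar W x y) ^ 2 - (∑ y, W x y * iStar W x y) ^ 2

/-- `V_min`. -/
def Vmin (W : X → Y → ℝ) : ℝ :=
  sInf {v | ∃ P ∈ capacityAchievers W, v = ∑ x, P x * nu W x}

/-- `V_max`. -/
def Vmax (W : X → Y → ℝ) : ℝ :=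
  sSup {v | ∃ P ∈ capacityAchievers W, v = ∑ x, P x * nu W x}

/-- `V_ε`. -/
def Veps (W : X → Y → ℝ) (ε : ℝ) : ℝ := if ε < 1/2 then Vmin W else Vmax W

/-- `ν_min = min_x ν_x`. -/
def numin (W : X → Y → ℝ) [Nonempty X] : ℝ := ⨅ x, nu W x

/-- `ν_max = max_x ν_x`. -/
def numax (W : X → Y → ℝ) [Nonempty X] : ℝ := ⨆ x, nu W x

/-- Average error probability of the feedback code `(enc, dec)` with `M` messages
and blocklength `n`. -/
def errProb (W : X → Y → ℝ) (n M : ℕ) (enc : Fin M → List Y → X)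
    (dec : (Fin n → Y) → Fin M) : ℝ :=
  (M : ℝ)⁻¹ * ∑ m : Fin M, ∑ y : Fin n → Y,
    (∏ k : Fin n, W (enc m ((List.ofFn y).take (k : ℕ))) (y k)) *
      (if dec y = m then 0 else 1)

/-- Minimum average error probability of `(n,R)` feedback codes. -/
def minErr (W : X → Y → ℝ) (n : ℕ) (R : ℝ) : ℝ :=
  sInf {e | ∃ enc dec, e = errProb W n ⌈Real.exp (n * R)⌉₊ enc dec}

/-- `M*_fb(n, ε)`. -/
def Mfb (W : X → Y → ℝ) (n : ℕ) (ε : ℝ) : ℝ :=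
  sSup {m | ∃ R : ℝ, m = (⌈Real.exp (n * R)⌉₊ : ℝ) ∧ minErr W n R ≤ ε}

/-- Standard Gaussian density `φ`. -/
def gpdf (u : ℝ) : ℝ := (Real.sqrt (2 * Real.pi))⁻¹ * Real.exp (-u ^ 2 / 2)

/-- Standard Gaussian CDF `Φ`. -/
def gcdf (t : ℝ) : ℝ := ∫ u in Set.Iic t, gpdf u

/-- Inverse Gaussian CDF `Φ⁻¹`. -/
def gcdfInv : ℝ → ℝ := Function.invFun gcdf

/-- The sequence `(log M*_fb(n,ε) - nC)/√n` whose liminf/limsup is the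
second-order coding rate with feedback. -/
def SOfb (W : X → Y → ℝ) (ε : ℝ) (n : ℕ) : ℝ :=
  (Real.log (Mfb W n ε) - n * capacity W) / Real.sqrt n

/-!
Feedback lets the encoder choose its input distribution for the second half of the block after
seeing how much information density the first half has collected. Both halves of the block use
random codes: the first with a capacity-achieving input of dispersion `V_min`, the second with the
same input if the first half is ahead of the threshold, and with an input of dispersion `V_max` if
it is behind. Given a deficit, the larger dispersion makes it likelier to be recovered. All
capacity-achieving inputs induce the same output distribution `q*`, so Feinstein's argument applies
to the channel from first and second half inputs jointly and bounds the error by the distribution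
function of the total information density, up to an exponentially small union bound.

By the central limit theorem in each half (uniformly in the residual threshold, by Pólya's theorem)
this error tends to `∫ switchErr Φ Φ β (√2 u) dN(0,1)`. Keeping the dispersion `V_min` throughout
would give `Φ(u)`, because a sum of two independent standard Gaussians has variance `2`; switching
saves at least `switchGain β u = (1 - β) φ(2√2 u) (1/√(2π) - φ(√2 u))`. Hence the rate with
`u = Φ⁻¹(α ε)` is achieved with error `ε` as soon as `α ε - switchGain β u < ε`, i.e. `f α < 0`.
-/

section

open ProbabilityTheory

lemma cdf_conv (μ ν : Measure ℝ) [IsProbabilityMeasure μ] [IsProbabilityMeasure ν] (t : ℝ) :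
    cdf (μ ∗ ν) t = ∫ z, cdf ν (t - z) ∂μ := by
  have hsection : ∀ z, Prod.mk z ⁻¹' ((fun x : ℝ × ℝ => x.1 + x.2) ⁻¹' Iic t) = Iic (t - z) := by
    intro z
    ext x
    simp [le_sub_iff_add_le']
  have hmeas : Measurable fun z => ν (Iic (t - z)) := by
    simp_rw [← ofReal_cdf ν]
    exact ((monotone_cdf ν).measurable.comp (measurable_id.const_sub t)).ennreal_ofReal
  simp_rw [cdf_eq_real, measureReal_def]
  rw [integral_toReal hmeas.aemeasurable (ae_of_all _ fun _ => measure_lt_top _ _),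
    Measure.conv, Measure.map_apply (by fun_prop) measurableSet_Iic,
    Measure.prod_apply (measurableSet_Iic.preimage (by fun_prop))]
  simp_rw [hsection]

lemma cdf_map_const_mul (μ : Measure ℝ) [IsProbabilityMeasure μ] {c : ℝ} (hc : 0 < c) (t : ℝ) :
    cdf (μ.map (c * ·)) (c * t) = cdf μ t := by
  have : IsProbabilityMeasure (μ.map (c * ·)) := Measure.isProbabilityMeasure_map (by fun_prop)
  have hpre : (c * ·) ⁻¹' Iic (c * t) = Iic t := by
    ext x
    exact mul_le_mul_iff_right₀ hc
  simp_rw [cdf_eq_real]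
  rw [map_measureReal_apply (by fun_prop) measurableSet_Iic, hpre]

lemma gpdf_eq_gaussianPDFReal (x : ℝ) : gpdf x = gaussianPDFReal 0 1 x := by
  simp [gpdf, gaussianPDFReal]

lemma gpdf_pos (x : ℝ) : 0 < gpdf x := by
  rw [gpdf_eq_gaussianPDFReal]
  exact gaussianPDFReal_pos _ _ _ one_ne_zero

lemma continuous_gpdf : Continuous gpdf := by
  unfold gpdf
  fun_prop

lemma integrable_gpdf : Integrable gpdf := by
  rw [funext gpdf_eq_gaussianPDFReal]
  exact integrable_gaussianPDFReal _ _

lemma gpdf_zero : gpdf 0 = (√(2 * π))⁻¹ := by simp [gpdf]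

lemma gpdf_neg (x : ℝ) : gpdf (-x) = gpdf x := by simp [gpdf]

lemma gpdf_le_of_sq_le {x y : ℝ} (h : x ^ 2 ≤ y ^ 2) : gpdf y ≤ gpdf x := by
  unfold gpdf
  gcongr

lemma gpdf_lt_gpdf_zero {x : ℝ} (hx : x ≠ 0) : gpdf x < gpdf 0 := by
  have : 0 < x ^ 2 := by positivity
  rw [gpdf, gpdf, zero_pow two_ne_zero, neg_zero, zero_div]
  gcongr
  linarith

lemma hasDerivAt_gpdf (x : ℝ) : HasDerivAt gpdf (-x * gpdf x) x := by
  unfold gpdf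
  have h : HasDerivAt (fun u : ℝ => -u ^ 2 / 2) (-x) x := by
    convert! ((hasDerivAt_pow 2 x).neg).div_const 2 using 1
    simp
    ring
  convert! (h.exp).const_mul (√(2 * π))⁻¹ using 1
  ring

lemma gcdf_eq_cdf : gcdf = cdf (gaussianReal 0 1) := by
  ext t
  rw [cdf_eq_real, measureReal_def, gaussianReal_apply_eq_integral _ one_ne_zero,
    ENNReal.toReal_ofReal (integral_nonneg fun x => gaussianPDFReal_nonneg _ _ _)]
  simp only [gcdf, gpdf_eq_gaussianPDFReal]

lemma gcdf_sub (a b : ℝ) : gcdf b - gcdf a = ∫ x in a..b, gpdf x :=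
  intervalIntegral.integral_Iic_sub_Iic integrable_gpdf.integrableOn integrable_gpdf.integrableOn

lemma strictMono_gcdf : StrictMono gcdf := fun a b hab => by
  have := intervalIntegral.intervalIntegral_pos_of_pos
    (integrable_gpdf.intervalIntegrable (a := a) (b := b)) gpdf_pos hab
  rw [← gcdf_sub] at this
  linarith

lemma continuous_gcdf : Continuous gcdf := by
  have h : gcdf = fun b => gcdf 0 + ∫ x in (0 : ℝ)..b, gpdf x := by
    ext b
    rw [← gcdf_sub]
    ring
  rw [h]
  exact continuous_const.add
    (intervalIntegral.continuous_primitive (fun _ _ => integrable_gpdf.intervalIntegrable) 0)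

lemma gcdf_zero : gcdf 0 = 1 / 2 := by
  have hsymm : gcdf 0 = ∫ x in Ioi (0 : ℝ), gpdf x := by
    simpa [gpdf_neg, gcdf] using integral_comp_neg_Iic (0 : ℝ) gpdf
  have hadd : gcdf 0 + ∫ x in Ioi (0 : ℝ), gpdf x = ∫ x, gpdf x := by
    rw [← compl_Iic]
    exact integral_add_compl measurableSet_Iic integrable_gpdf
  have hone : ∫ x, gpdf x = 1 := by
    simp only [gpdf_eq_gaussianPDFReal]
    exact integral_gaussianPDFReal_eq_one 0 one_ne_zero
  linarith

lemma gcdfInv_gcdf (u : ℝ) : gcdfInv (gcdf u) = u :=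
  Function.leftInverse_invFun strictMono_gcdf.injective u

lemma gcdf_gcdfInv {p : ℝ} (h0 : 0 < p) (h1 : p < 1) : gcdf (gcdfInv p) = p :=
  Function.invFun_eq <| mem_range_of_exists_le_of_exists_ge continuous_gcdf
    (by rw [gcdf_eq_cdf]; exact ((tendsto_cdf_atBot _).eventually_le_const h0).exists)
    (by rw [gcdf_eq_cdf]; exact ((tendsto_cdf_atTop _).eventually_const_le h1).exists)

lemma gcdfInv_lt_gcdfInv {p q : ℝ} (h0 : 0 < p) (hpq : p < q) (h1 : q < 1) :
    gcdfInv p < gcdfInv q := by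
  rwa [← strictMono_gcdf.lt_iff_lt, gcdf_gcdfInv h0 (hpq.trans h1), gcdf_gcdfInv (h0.trans hpq) h1]

lemma gcdfInv_neg {p : ℝ} (h0 : 0 < p) (h1 : p < 1 / 2) : gcdfInv p < 0 := by
  rwa [← strictMono_gcdf.lt_iff_lt, gcdf_gcdfInv h0 (by linarith), gcdf_zero]

lemma integral_gcdf_sqrt_two_mul_sub (u : ℝ) :
    ∫ z, gcdf (√2 * u - z) ∂gaussianReal 0 1 = gcdf u := by
  have hmap : (gaussianReal 0 1).map (√2 * ·) = gaussianReal 0 1 ∗ gaussianReal 0 1 := by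
    rw [gaussianReal_conv_gaussianReal, gaussianReal_map_const_mul]
    congr 1
    · simp
    · ext
      norm_num
  rw [gcdf_eq_cdf, ← cdf_conv, ← hmap, cdf_map_const_mul _ (by positivity)]

lemma one_sub_mul_le_gcdf_sub {β w : ℝ} (hβ0 : 0 ≤ β) (hβ1 : β ≤ 1) (hw : 0 ≤ w) :
    (1 - β) * (w * gpdf w) ≤ gcdf w - gcdf (β * w) := by
  have hle : β * w ≤ w := mul_le_of_le_one_left hw hβ1
  calc (1 - β) * (w * gpdf w) = ∫ _ in (β * w)..w, gpdf w := by
        simp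
        ring
    _ ≤ ∫ x in (β * w)..w, gpdf x :=
        intervalIntegral.integral_mono_on hle intervalIntegrable_const
          integrable_gpdf.intervalIntegrable fun x hx =>
            gpdf_le_of_sq_le (pow_le_pow_left₀ ((mul_nonneg hβ0 hw).trans hx.1) hx.2 2)
    _ = gcdf w - gcdf (β * w) := (gcdf_sub _ _).symm

/-- Conditional error probability of the two-phase scheme when the information density collected
in the first phase falls short of its target by `a - z` standard deviations: the second phase has
error profile `F` if the target has been met, and the flatter profile `F' (β * ·)` otherwise. -/
def switchErr (F F' : ℝ → ℝ) (β a z : ℝ) : ℝ :=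
  if a ≤ z then F (a - z) else F' (β * (a - z))

lemma switchErr_mem_Icc {F F' : ℝ → ℝ} (hF : ∀ t, F t ∈ Icc 0 1) (hF' : ∀ t, F' t ∈ Icc 0 1)
    (β a z : ℝ) : switchErr F F' β a z ∈ Icc 0 1 := by
  unfold switchErr
  split_ifs
  exacts [hF _, hF' _]

lemma continuous_switchErr {F F' : ℝ → ℝ} (hF : Continuous F) (hF' : Continuous F')
    (h0 : F 0 = F' 0) (β a : ℝ) : Continuous (switchErr F F' β a) := by
  refine Continuous.if_le (by fun_prop) (by fun_prop) continuous_const continuous_id fun z hz => ?_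
  simp [← hz, h0]

/-- Lower bound for the error probability that switching to the larger dispersion saves over the
code without feedback. -/
def switchGain (β u : ℝ) : ℝ :=
  (1 - β) * gpdf (2 * √2 * u) * ((√(2 * π))⁻¹ - gpdf (√2 * u))

lemma continuous_switchGain (β : ℝ) : Continuous (switchGain β) := by
  have := continuous_gpdf
  unfold switchGain
  fun_prop

lemma switchGain_pos {β u : ℝ} (hβ : β < 1) (hu : u ≠ 0) : 0 < switchGain β u := by
  have hlt := gpdf_lt_gpdf_zero (mul_ne_zero (by positivity : √2 ≠ 0) hu)
  rw [gpdf_zero] at hlt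
  exact mul_pos (mul_pos (sub_pos.2 hβ) (gpdf_pos _)) (sub_pos.2 hlt)

lemma exists_sub_switchGain_lt {β p : ℝ} (hβ : β < 1) (h0 : 0 < p) (h1 : p < 1 / 2) :
    ∃ q, p < q ∧ q < 1 / 2 ∧ q - switchGain β (gcdfInv q) < p := by
  have hneg : gcdfInv p < 0 := gcdfInv_neg h0 h1
  have hlt : gcdf (gcdfInv p) - switchGain β (gcdfInv p) < p := by
    linarith [gcdf_gcdfInv h0 (by linarith), switchGain_pos hβ hneg.ne]
  have hcont : Continuous fun u => gcdf u - switchGain β u :=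
    continuous_gcdf.sub (continuous_switchGain β)
  obtain ⟨u, hgain, hu, hu0⟩ := (((hcont.tendsto _).eventually_lt_const hlt).filter_mono
    nhdsWithin_le_nhds |>.and (Ioo_mem_nhdsGT hneg)).exists
  refine ⟨gcdf u, ?_, gcdf_zero ▸ strictMono_gcdf hu0, by rwa [gcdfInv_gcdf]⟩
  rw [← gcdf_gcdfInv h0 (by linarith)]
  exact strictMono_gcdf hu

lemma integral_sub_mul_gpdf (a : ℝ) :
    ∫ z in (2 * a)..a, (a - z) * gpdf (a - z) = gpdf 0 - gpdf a := by
  have hcont := continuous_gpdf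
  rw [intervalIntegral.integral_eq_sub_of_hasDerivAt (f := fun z => gpdf (a - z))]
  · rw [sub_self, ← gpdf_neg a]
    ring_nf
  · intro x _
    convert! (hasDerivAt_gpdf (a - x)).comp x ((hasDerivAt_id x).const_sub a) using 1
    ring
  · exact Continuous.intervalIntegrable (by fun_prop) _ _

lemma gcdf_mem_Icc (t : ℝ) : gcdf t ∈ Icc 0 1 := by
  rw [gcdf_eq_cdf]
  exact ⟨cdf_nonneg _ _, cdf_le_one _ _⟩

lemma le_gcdf_sub_switchErr {β a z : ℝ} (hβ0 : 0 ≤ β) (hβ1 : β ≤ 1) (hz : z ≤ a) :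
    (1 - β) * ((a - z) * gpdf (a - z)) ≤ gcdf (a - z) - switchErr gcdf gcdf β a z := by
  rcases hz.eq_or_lt with rfl | h
  · simp [switchErr]
  · simpa only [switchErr, if_neg h.not_ge] using one_sub_mul_le_gcdf_sub hβ0 hβ1 (sub_nonneg.2 hz)

lemma switchErr_gcdf_le {β : ℝ} (hβ0 : 0 ≤ β) (hβ1 : β ≤ 1) (a z : ℝ) :
    switchErr gcdf gcdf β a z ≤ gcdf (a - z) := by
  rcases le_total a z with h | h
  · rw [switchErr, if_pos h]
  · have := le_gcdf_sub_switchErr hβ0 hβ1 h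
    have := mul_nonneg (sub_nonneg.2 hβ1) (mul_nonneg (sub_nonneg.2 h) (gpdf_pos (a - z)).le)
    linarith

-- On `[2a, a]` the weight `φ` is at least `φ(2a)`, and there the saving is at least the derivative
-- of `z ↦ (1 - β) φ(a - z)`; the rest of the line is discarded.
lemma le_integral_gcdf_sub_switchErr {β a : ℝ} (hβ0 : 0 ≤ β) (hβ1 : β ≤ 1) (ha : a ≤ 0) :
    (1 - β) * gpdf (2 * a) * (gpdf 0 - gpdf a) ≤
      ∫ z, (gcdf (a - z) - switchErr gcdf gcdf β a z) ∂gaussianReal 0 1 := by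
  set D := fun z => gcdf (a - z) - switchErr gcdf gcdf β a z
  have hgpdf := continuous_gpdf
  have hD0 : ∀ z, 0 ≤ D z := fun z => sub_nonneg.2 (switchErr_gcdf_le hβ0 hβ1 a z)
  have hD1 : ∀ z, D z ≤ 1 := fun z => by
    linarith [(gcdf_mem_Icc (a - z)).2, (switchErr_mem_Icc gcdf_mem_Icc gcdf_mem_Icc β a z).1]
  have hDcont : Continuous fun z => gpdf z * D z := hgpdf.mul <|
    (continuous_gcdf.comp (by fun_prop)).sub
      (continuous_switchErr continuous_gcdf continuous_gcdf rfl β a)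
  have hint : Integrable fun z => gpdf z * D z := by
    refine integrable_gpdf.mono hDcont.aestronglyMeasurable (ae_of_all _ fun z => ?_)
    rw [norm_mul, Real.norm_of_nonneg (hD0 z)]
    exact mul_le_of_le_one_right (norm_nonneg _) (hD1 z)
  have hpointwise : ∀ z ∈ Icc (2 * a) a,
      (1 - β) * gpdf (2 * a) * ((a - z) * gpdf (a - z)) ≤ gpdf z * D z := by
    intro z hz
    have hweight : gpdf (2 * a) ≤ gpdf z := gpdf_le_of_sq_le (by nlinarith [hz.1, hz.2])
    calc (1 - β) * gpdf (2 * a) * ((a - z) * gpdf (a - z))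
        = gpdf (2 * a) * ((1 - β) * ((a - z) * gpdf (a - z))) := by ring
      _ ≤ gpdf z * D z := mul_le_mul hweight (le_gcdf_sub_switchErr hβ0 hβ1 hz.2)
          (mul_nonneg (sub_nonneg.2 hβ1) (mul_nonneg (sub_nonneg.2 hz.2) (gpdf_pos _).le))
          (gpdf_pos z).le
  calc (1 - β) * gpdf (2 * a) * (gpdf 0 - gpdf a)
      = ∫ z in (2 * a)..a, (1 - β) * gpdf (2 * a) * ((a - z) * gpdf (a - z)) := by
        rw [intervalIntegral.integral_const_mul, integral_sub_mul_gpdf]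
    _ ≤ ∫ z in (2 * a)..a, gpdf z * D z :=
        intervalIntegral.integral_mono_on (by linarith)
          (Continuous.intervalIntegrable (by fun_prop) _ _) (hDcont.intervalIntegrable _ _)
          hpointwise
    _ ≤ ∫ z, gpdf z * D z := by
        rw [intervalIntegral.integral_of_le (by linarith)]
        exact setIntegral_le_integral hint (ae_of_all _ fun z => mul_nonneg (gpdf_pos z).le (hD0 z))
    _ = ∫ z, D z ∂gaussianReal 0 1 := by
        rw [integral_gaussianReal_eq_integral_smul one_ne_zero]
        simp only [gpdf_eq_gaussianPDFReal, smul_eq_mul]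

lemma integral_switchErr_le {β u : ℝ} (hβ0 : 0 ≤ β) (hβ1 : β ≤ 1) (hu : u ≤ 0) :
    ∫ z, switchErr gcdf gcdf β (√2 * u) z ∂gaussianReal 0 1 ≤ gcdf u - switchGain β u := by
  have hgain := le_integral_gcdf_sub_switchErr hβ0 hβ1
    (mul_nonpos_of_nonneg_of_nonpos (Real.sqrt_nonneg 2) hu)
  rw [integral_sub, integral_gcdf_sqrt_two_mul_sub, gpdf_zero, ← mul_assoc 2] at hgain
  · unfold switchGain
    linarith
  · exact Integrable.of_mem_Icc 0 1 (continuous_gcdf.comp (by fun_prop)).aemeasurable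
      (ae_of_all _ fun _ => gcdf_mem_Icc _)
  · exact Integrable.of_mem_Icc 0 1
      (continuous_switchErr continuous_gcdf continuous_gcdf rfl _ _).aemeasurable
      (ae_of_all _ (switchErr_mem_Icc gcdf_mem_Icc gcdf_mem_Icc _ _))

lemma tendsto_cdf {ι : Type*} {l : Filter ι} {μs : ι → ProbabilityMeasure ℝ}
    {μ : ProbabilityMeasure ℝ} (h : Tendsto μs l (nhds μ)) {t : ℝ}
    (ht : ContinuousAt (cdf (μ : Measure ℝ)) t) :
    Tendsto (fun i => cdf (μs i : Measure ℝ) t) l (nhds (cdf (μ : Measure ℝ) t)) := by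
  have hnull : (μ : Measure ℝ) (frontier (Iic t)) = 0 := by
    rw [frontier_Iic, ← measure_cdf (μ : Measure ℝ), StieltjesFunction.measure_singleton,
      leftLim_eq_of_tendsto (ht.tendsto.mono_left nhdsWithin_le_nhds), sub_self,
      ENNReal.ofReal_zero]
  simp_rw [cdf_eq_real]
  exact (ENNReal.tendsto_toReal (measure_ne_top _ _)).comp
    (ProbabilityMeasure.tendsto_measure_of_null_frontier_of_tendsto' h hnull)

lemma tendstoLocallyUniformly_of_monotone {ι : Type*} {l : Filter ι} {F : ι → ℝ → ℝ} {G : ℝ → ℝ}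
    (hF : ∀ i, Monotone (F i)) (hGmono : Monotone G) (hG : Continuous G)
    (hlim : ∀ t, Tendsto (fun i => F i t) l (nhds (G t))) : TendstoLocallyUniformly F G l := by
  rw [Metric.tendstoLocallyUniformly_iff]
  intro η hη x
  have hnear : ∀ᶠ y in nhds x, dist (G y) (G x) < η / 2 :=
    Metric.tendsto_nhds.1 (hG.tendsto x) _ (half_pos hη)
  obtain ⟨c, d, hx, hcd⟩ := mem_nhds_iff_exists_Ioo_subset.1 hnear
  obtain ⟨c', hcc', hc'x⟩ := exists_between hx.1
  obtain ⟨d', hxd', hd'd⟩ := exists_between hx.2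
  have hc' : G x - η / 2 < G c' :=
    sub_lt_comm.1 (abs_sub_lt_iff.1 (hcd ⟨hcc', hc'x.trans hx.2⟩)).2
  have hd' : G d' < G x + η / 2 :=
    sub_lt_iff_lt_add'.1 (abs_sub_lt_iff.1 (hcd ⟨hx.1.trans hxd', hd'd⟩)).1
  refine ⟨Ioo c' d', Ioo_mem_nhds hc'x hxd', ?_⟩
  filter_upwards [(hlim c').eventually_const_lt hc',
    (hlim d').eventually_lt_const hd'] with i hic hid y hy
  rw [Real.dist_eq, abs_lt]
  constructor <;>
    linarith [hF i hy.1.le, hF i hy.2.le, hGmono hy.1.le, hGmono hy.2.le]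

/-- **Pólya's theorem**: monotonicity makes the pointwise convergence uniform. -/
theorem tendstoUniformly_cdf {ι : Type*} {l : Filter ι} {μs : ι → ProbabilityMeasure ℝ}
    {μ : ProbabilityMeasure ℝ} (h : Tendsto μs l (nhds μ)) (hc : Continuous (cdf (μ : Measure ℝ))) :
    TendstoUniformly (fun i => cdf (μs i : Measure ℝ)) (cdf (μ : Measure ℝ)) l := by
  have hlim := fun t => tendsto_cdf h (hc.continuousAt (x := t))
  have hmono := monotone_cdf (μ : Measure ℝ)
  rw [Metric.tendstoUniformly_iff]
  intro η hη
  obtain ⟨a, ha⟩ := ((tendsto_cdf_atBot (μ : Measure ℝ)).eventually_lt_const hη).exists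
  obtain ⟨b, hb⟩ := ((tendsto_cdf_atTop (μ : Measure ℝ)).eventually_const_lt
    (sub_lt_self 1 hη)).exists
  have hmid : TendstoUniformlyOn (fun i => cdf (μs i : Measure ℝ)) (cdf (μ : Measure ℝ)) l
      (Icc a b) :=
    (tendstoLocallyUniformlyOn_iff_tendstoUniformlyOn_of_compact isCompact_Icc).1
      (tendstoLocallyUniformly_of_monotone (fun i => monotone_cdf _) hmono hc
        hlim).tendstoLocallyUniformlyOn
  filter_upwards [Metric.tendstoUniformlyOn_iff.1 hmid η hη, (hlim a).eventually_lt_const ha,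
    (hlim b).eventually_const_lt hb] with i hi hia hib t
  have hmono_i := monotone_cdf (μs i : Measure ℝ)
  rcases lt_or_ge t a with hta | hat
  · rw [Real.dist_eq, abs_lt]
    constructor <;> linarith [hmono hta.le, hmono_i hta.le, cdf_nonneg (μ : Measure ℝ) t,
      cdf_nonneg (μs i : Measure ℝ) t]
  rcases lt_or_ge b t with hbt | htb
  · rw [Real.dist_eq, abs_lt]
    constructor <;> linarith [hmono hbt.le, hmono_i hbt.le, cdf_le_one (μ : Measure ℝ) t,
      cdf_le_one (μs i : Measure ℝ) t]
  · exact hi t ⟨hat, htb⟩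

lemma tendsto_integral_of_tendstoUniformly {Ω ι : Type*} [TopologicalSpace Ω] [MeasurableSpace Ω]
    [OpensMeasurableSpace Ω] {l : Filter ι} {μs : ι → ProbabilityMeasure Ω}
    {μ : ProbabilityMeasure Ω} (h : Tendsto μs l (nhds μ)) {f : ι → Ω → ℝ}
    {g : BoundedContinuousFunction Ω ℝ} (hint : ∀ i, Integrable (f i) (μs i : Measure Ω))
    (hf : TendstoUniformly f g l) :
    Tendsto (fun i => ∫ x, f i x ∂(μs i : Measure Ω)) l (nhds (∫ x, g x ∂(μ : Measure Ω))) := by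
  have hg := ProbabilityMeasure.tendsto_iff_forall_integral_tendsto.1 h g
  refine hg.congr_dist (Metric.tendsto_nhds.2 fun η hη => ?_)
  filter_upwards [Metric.tendstoUniformly_iff.1 hf (η / 2) (half_pos hη)] with i hi
  have hclose : ‖∫ x, (g x - f i x) ∂(μs i : Measure Ω)‖ ≤ η / 2 := by
    simpa only [probReal_univ, mul_one] using
      norm_integral_le_of_norm_le_const (μ := (μs i : Measure Ω))
        (ae_of_all _ fun x => (dist_eq_norm (g x) (f i x) ▸ hi x).le)
  rw [Real.dist_0_eq_abs, abs_of_nonneg dist_nonneg, dist_eq_norm,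
    ← integral_sub (g.integrable _) (hint i)]
  linarith

lemma tendstoUniformly_switchErr {ι : Type*} {l : Filter ι} {F F' : ι → ℝ → ℝ} {G G' : ℝ → ℝ}
    (hF : TendstoUniformly F G l) (hF' : TendstoUniformly F' G' l) (β a : ℝ) :
    TendstoUniformly (fun i => switchErr (F i) (F' i) β a) (switchErr G G' β a) l := by
  rw [Metric.tendstoUniformly_iff] at *
  intro η hη
  filter_upwards [hF η hη, hF' η hη] with i hi hi' z
  unfold switchErr
  split_ifs
  exacts [hi _, hi' _]

section Law

variable {E : Type*} [Fintype E] {p : E → ℝ}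

/-- The distribution of the random variable `g` on a finite alphabet with mass function `p`. -/
def IsDist.law (hp : IsDist p) (g : E → ℝ) : ProbabilityMeasure ℝ :=
  ⟨∑ e, ENNReal.ofReal (p e) • Measure.dirac (g e), ⟨by
    simp [Measure.finsetSum_apply, ← ENNReal.ofReal_sum_of_nonneg fun e _ => hp.1 e, hp.2]⟩⟩

lemma IsDist.integrable_law (hp : IsDist p) (g : E → ℝ) {V : Type*} [NormedAddCommGroup V]
    (f : ℝ → V) : Integrable f (hp.law g : Measure ℝ) :=
  integrable_finsetSum_measure.2 fun _ _ =>
    (integrable_dirac (by simp)).smul_measure ENNReal.ofReal_ne_top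

lemma IsDist.integral_law (hp : IsDist p) (g : E → ℝ) {V : Type*} [NormedAddCommGroup V]
    [NormedSpace ℝ V] [CompleteSpace V] (f : ℝ → V) :
    ∫ x, f x ∂(hp.law g : Measure ℝ) = ∑ e, p e • f (g e) := by
  rw [IsDist.law, ProbabilityMeasure.coe_mk, integral_finsetSum_measure fun e _ =>
    (integrable_dirac (by simp)).smul_measure ENNReal.ofReal_ne_top]
  simp_rw [integral_smul_measure, integral_dirac, ENNReal.toReal_ofReal (hp.1 _)]

lemma IsDist.cdf_law (hp : IsDist p) (g : E → ℝ) (t : ℝ) :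
    cdf (hp.law g : Measure ℝ) t = ∑ e, p e * if g e ≤ t then 1 else 0 := by
  rw [cdf_eq_real, ← integral_indicator_one measurableSet_Iic, hp.integral_law]
  simp [indicator_apply]

/-- The mass function of a word of `N` independent letters drawn from `p`. -/
def iid {E : Type*} (p : E → ℝ) (N : ℕ) (e : Fin N → E) : ℝ := ∏ k, p (e k)

lemma IsDist.iid (hp : IsDist p) (N : ℕ) : IsDist (iid p N) := by
  refine ⟨fun e => Finset.prod_nonneg fun k _ => hp.1 _, ?_⟩
  simp only [Paper.iid, ← Fintype.sum_pow, hp.2, one_pow]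

/-- Normalised sum of the scores `g` of the letters of a word. -/
def normSum {E : Type*} (g : E → ℝ) {N : ℕ} (e : Fin N → E) : ℝ :=
  (√(N : ℝ))⁻¹ * ∑ k, g (e k)

lemma IsDist.charFun_law_normSum (hp : IsDist p) (g : E → ℝ) (N : ℕ) (t : ℝ) :
    charFun ((hp.iid N).law (normSum g) : Measure ℝ) t =
      charFun (hp.law g : Measure ℝ) ((√(N : ℝ))⁻¹ * t) ^ N := by
  simp_rw [charFun_apply_real, IsDist.integral_law, Fintype.sum_pow]
  refine Finset.sum_congr rfl fun e _ => ?_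
  simp only [Paper.iid, normSum, Complex.real_smul, Complex.ofReal_prod, Complex.ofReal_mul,
    Complex.ofReal_sum, Finset.prod_mul_distrib, ← Complex.exp_sum, Finset.mul_sum,
    Finset.sum_mul]
  congr 2
  exact Finset.sum_congr rfl fun k _ => by ring

theorem IsDist.tendsto_law_normSum (hp : IsDist p) {g : E → ℝ} (h0 : ∑ e, p e * g e = 0)
    (h1 : ∑ e, p e * g e ^ 2 = 1) :
    Tendsto (fun N => (hp.iid N).law (normSum g)) atTop
      (nhds (⟨gaussianReal 0 1, inferInstance⟩ : ProbabilityMeasure ℝ)) := by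
  refine ProbabilityMeasure.tendsto_iff_tendsto_charFun.2 fun t => ?_
  have hmean : ∫ x, x ∂(hp.law g : Measure ℝ) = 0 := by
    simpa only [hp.integral_law, smul_eq_mul] using h0
  have hvar : ∫ x, x ^ 2 ∂(hp.law g : Measure ℝ) = 1 := by
    simpa only [hp.integral_law, smul_eq_mul] using h1
  have hclt := tendsto_charFun_inv_sqrt_mul_pow aemeasurable_id hmean hvar t
  rw [Measure.map_id] at hclt
  simpa [hp.charFun_law_normSum, charFun_gaussianReal, neg_div] using hclt

lemma IsDist.tendstoUniformly_cdf_normSum (hp : IsDist p) {g : E → ℝ} (h0 : ∑ e, p e * g e = 0)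
    (h1 : ∑ e, p e * g e ^ 2 = 1) :
    TendstoUniformly (fun N => cdf ((hp.iid N).law (normSum g) : Measure ℝ)) gcdf atTop := by
  rw [gcdf_eq_cdf]
  exact tendstoUniformly_cdf (hp.tendsto_law_normSum h0 h1) (gcdf_eq_cdf ▸ continuous_gcdf)

theorem IsDist.tendsto_sum_switchErr {E' : Type*} [Fintype E'] {p' : E' → ℝ} {g : E → ℝ}
    {g' : E' → ℝ} (hp : IsDist p) (h0 : ∑ e, p e * g e = 0) (h1 : ∑ e, p e * g e ^ 2 = 1)
    (hp' : IsDist p') (h0' : ∑ e, p' e * g' e = 0) (h1' : ∑ e, p' e * g' e ^ 2 = 1) (β a : ℝ) :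
    Tendsto (fun N : ℕ => ∑ e : Fin N → E, Paper.iid p N e *
        switchErr (cdf ((hp.iid N).law (normSum g) : Measure ℝ))
          (cdf ((hp'.iid N).law (normSum g') : Measure ℝ)) β a (normSum g e))
      atTop (nhds (∫ z, switchErr gcdf gcdf β a z ∂gaussianReal 0 1)) := by
  let limit : BoundedContinuousFunction ℝ ℝ := .ofNormedAddCommGroup (switchErr gcdf gcdf β a)
    (continuous_switchErr continuous_gcdf continuous_gcdf rfl β a) 1 fun z => by
      obtain ⟨hnonneg, hle⟩ := switchErr_mem_Icc gcdf_mem_Icc gcdf_mem_Icc β a z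
      rwa [Real.norm_of_nonneg hnonneg]
  have hunif := tendstoUniformly_switchErr (hp.tendstoUniformly_cdf_normSum h0 h1)
    (hp'.tendstoUniformly_cdf_normSum h0' h1') β a
  have hlim := tendsto_integral_of_tendstoUniformly (g := limit) (hp.tendsto_law_normSum h0 h1)
    (fun N => (hp.iid N).integrable_law _ _) hunif
  simp only [IsDist.integral_law, smul_eq_mul] at hlim
  exact hlim

end Law

section OneShot

variable {A B : Type*} [Fintype A] [Fintype B] {P : A → ℝ} {K : A → B → ℝ}

lemma outDist_nonneg {B : Type*} {K : A → B → ℝ} (hP : ∀ a, 0 ≤ P a) (hK : ∀ a b, 0 ≤ K a b)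
    (b : B) : 0 ≤ outDist P K b :=
  Finset.sum_nonneg fun a _ => mul_nonneg (hP a) (hK a b)

/-- The joint mass function of the input and the output of the channel `K`. -/
def joint {A B : Type*} (P : A → ℝ) (K : A → B → ℝ) (e : A × B) : ℝ := P e.1 * K e.1 e.2

lemma IsDist.joint (hP : IsDist P) (hK : IsChannel K) : IsDist (joint P K) := by
  refine ⟨fun e => mul_nonneg (hP.1 _) ((hK _).1 _), ?_⟩
  simp only [Paper.joint, Fintype.sum_prod_type, ← Finset.mul_sum, (hK _).2, mul_one, hP.2]

/-- The information density of `K` relative to the output mass function `q`; `iStar W` is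
`infoDensity W (qStar W)`. -/
def infoDensity {A B : Type*} (K : A → B → ℝ) (q : B → ℝ) (e : A × B) : ℝ :=
  Real.log (K e.1 e.2 / q e.2)

lemma infoDensity_le_of_le {A B : Type*} {K : A → B → ℝ} {q : B → ℝ} {t : ℝ} {a : A} {b : B}
    (hpos : 0 < K a b) (hle : K a b ≤ q b * Real.exp t) :
    infoDensity K q (a, b) ≤ t := by
  have hqpos : 0 < q b := pos_of_mul_pos_left (hpos.trans_le hle) (Real.exp_pos t).le
  rw [infoDensity, Real.log_le_iff_le_exp (div_pos hpos hqpos), div_le_iff₀ hqpos, mul_comm]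
  exact hle

lemma IsDist.nonempty (hP : IsDist P) : Nonempty A := by
  by_contra h
  rw [not_nonempty_iff] at h
  simpa using hP.2

lemma IsDist.exists_le_of_sum_mul_le (hP : IsDist P) {f : A → ℝ} {s : ℝ}
    (h : ∑ a, P a * f a ≤ s) : ∃ a, f a ≤ s := by
  have := hP.nonempty
  obtain ⟨a, ha⟩ := Finite.exists_min f
  refine ⟨a, le_trans ?_ h⟩
  calc f a = ∑ a', P a' * f a := by rw [← Finset.sum_mul, hP.2, one_mul]
    _ ≤ ∑ a', P a' * f a' :=
      Finset.sum_le_sum fun a' _ => mul_le_mul_of_nonneg_left (ha a') (hP.1 a')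

/-- The outputs outside `U` that the codeword `a` makes more than `exp t` times as likely as the
reference mass function `q` does. -/
def decodingSet {A : Type*} (K : A → B → ℝ) (q : B → ℝ) (t : ℝ) (U : Finset B) (a : A) : Finset B :=
  {b | b ∉ U ∧ q b * Real.exp t < K a b}

lemma sum_compl_decodingSet_le {A : Type*} {K : A → B → ℝ} {q : B → ℝ} {a : A}
    (hK : ∀ b, 0 ≤ K a b) (t : ℝ) (U : Finset B) :
    ∑ b ∈ (decodingSet K q t U a)ᶜ, K a b ≤
      ∑ b, K a b * (if infoDensity K q (a, b) ≤ t then 1 else 0) + ∑ b ∈ U, K a b := by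
  rw [← Finset.univ_inter (decodingSet K q t U a)ᶜ, ← Finset.univ_inter U, ← Finset.sum_ite_mem,
    ← Finset.sum_ite_mem, ← Finset.sum_add_distrib]
  refine Finset.sum_le_sum fun b _ => ?_
  by_cases hbU : b ∈ U
  · rw [if_pos hbU]
    split_ifs <;> simp [hK b]
  by_cases hle : infoDensity K q (a, b) ≤ t
  · rw [if_pos hle, if_neg hbU]
    split_ifs <;> simp [hK b]
  by_cases hbD : b ∈ decodingSet K q t U a
  · simp [hbD, hbU, hle]
  have hlow : K a b ≤ q b * Real.exp t := by simpa [decodingSet, hbU] using hbD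
  have hzero : K a b = 0 := (hK b).eq_of_not_lt' fun hpos =>
    hle (infoDensity_le_of_le hpos hlow)
  simp [hzero]

-- A random codeword misses its decoding set with at most the probability on the right-hand side.
lemma exists_codeword (hP : IsDist P) (hK : IsChannel K) (t : ℝ) (U : Finset B) :
    ∃ (a : A) (S : Finset B), Disjoint S U ∧ ∑ b ∈ S, outDist P K b ≤ Real.exp (-t) ∧
      ∑ b ∈ Sᶜ, K a b ≤
        cdf ((hP.joint hK).law (infoDensity K (outDist P K)) : Measure ℝ) t +
          ∑ b ∈ U, outDist P K b := by
  set q := outDist P K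
  set S := decodingSet K q t U
  have hmean : ∑ a, P a * ∑ b ∈ (S a)ᶜ, K a b ≤
      cdf ((hP.joint hK).law (infoDensity K q) : Measure ℝ) t + ∑ b ∈ U, q b := by
    calc ∑ a, P a * ∑ b ∈ (S a)ᶜ, K a b
        ≤ ∑ a, P a * (∑ b, K a b * (if infoDensity K q (a, b) ≤ t then 1 else 0) +
            ∑ b ∈ U, K a b) :=
          Finset.sum_le_sum fun a _ => mul_le_mul_of_nonneg_left
            (sum_compl_decodingSet_le (hK a).1 t U) (hP.1 a)
      _ = _ := by
          simp only [mul_add, Finset.sum_add_distrib, Finset.mul_sum, IsDist.cdf_law, Paper.joint,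
            Fintype.sum_prod_type, mul_assoc, q, outDist]
          rw [Finset.sum_comm (s := U)]
  obtain ⟨a, ha⟩ := hP.exists_le_of_sum_mul_le hmean
  refine ⟨a, S a, Finset.disjoint_left.2 fun b hb => (Finset.mem_filter.1 hb).2.1, ?_, ha⟩
  rw [Real.exp_neg, ← one_div, le_div_iff₀ (Real.exp_pos t), Finset.sum_mul]
  calc ∑ b ∈ S a, q b * Real.exp t ≤ ∑ b ∈ S a, K a b :=
        Finset.sum_le_sum fun b hb => (Finset.mem_filter.1 hb).2.2.le
    _ ≤ ∑ b, K a b := Finset.sum_le_univ_sum_of_nonneg (hK a).1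
    _ = 1 := (hK a).2

/-- **Feinstein's lemma**: codewords are picked one after the other, each with a decoding set
disjoint from the union `U k` of the previous ones. -/
theorem exists_disjoint_decodingSets (hP : IsDist P) (hK : IsChannel K) (t : ℝ) (M : ℕ) :
    ∃ (c : Fin M → A) (D : Fin M → Finset B), (∀ m m', m ≠ m' → Disjoint (D m) (D m')) ∧
      ∀ m, ∑ b ∈ (D m)ᶜ, K (c m) b ≤
        cdf ((hP.joint hK).law (infoDensity K (outDist P K)) : Measure ℝ) t +
          M * Real.exp (-t) := by
  choose a S hdisj hmass herr using exists_codeword hP hK t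
  let U : ℕ → Finset B := fun k => k.rec ∅ fun _ V => V ∪ S V
  have hU : Monotone U := monotone_nat_of_le_succ fun k => Finset.subset_union_left
  have hUmass : ∀ k, ∑ b ∈ U k, outDist P K b ≤ k * Real.exp (-t) := by
    intro k
    induction k with
    | zero => simp [U]
    | succ k ih =>
      rw [show U (k + 1) = U k ∪ S (U k) from rfl, Finset.sum_union (hdisj _).symm]
      push_cast
      linarith [hmass (U k)]
  have hlt : ∀ {k l : ℕ}, k < l → Disjoint (S (U k)) (S (U l)) := fun {k l} hkl =>
    ((hdisj (U l)).mono_right (Finset.subset_union_right.trans (hU (Nat.succ_le_of_lt hkl)))).symm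
  refine ⟨fun m => a (U m), fun m => S (U m), fun m m' hne => ?_, fun m => ?_⟩
  · rcases lt_or_gt_of_ne (Fin.val_ne_of_ne hne) with h | h
    exacts [hlt h, (hlt h).symm]
  · have hm : (m : ℝ) * Real.exp (-t) ≤ M * Real.exp (-t) := by
      gcongr
      exact m.2.le
    linarith [herr (U m), hUmass m]

lemma exists_decoder_of_disjoint {B : Type*} {M : ℕ} (hM : 0 < M) {D : Fin M → Finset B}
    (hD : ∀ m m', m ≠ m' → Disjoint (D m) (D m')) :
    ∃ dec : B → Fin M, ∀ m, ∀ b ∈ D m, dec b = m := by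
  refine ⟨fun b => if h : ∃ m, b ∈ D m then h.choose else ⟨0, hM⟩, fun m b hb => ?_⟩
  have h : ∃ m, b ∈ D m := ⟨m, hb⟩
  simp only [dif_pos h]
  by_contra hne
  exact Finset.disjoint_left.1 (hD _ _ hne) h.choose_spec hb

theorem exists_code_of_cdf_infoDensity (hP : IsDist P) (hK : IsChannel K) (t : ℝ) {M : ℕ}
    (hM : 0 < M) :
    ∃ (c : Fin M → A) (dec : B → Fin M), ∀ m, ∑ b, K (c m) b * (if dec b = m then 0 else 1) ≤
      cdf ((hP.joint hK).law (infoDensity K (outDist P K)) : Measure ℝ) t +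
        M * Real.exp (-t) := by
  obtain ⟨c, D, hD, herr⟩ := exists_disjoint_decodingSets hP hK t M
  obtain ⟨dec, hdec⟩ := exists_decoder_of_disjoint hM hD
  refine ⟨c, dec, fun m => le_trans ?_ (herr m)⟩
  rw [← Finset.univ_inter (D m)ᶜ, ← Finset.sum_ite_mem]
  refine Finset.sum_le_sum fun b _ => ?_
  by_cases hb : b ∈ D m
  · simp [hb, hdec m b hb]
  · rw [if_pos (Finset.mem_compl.2 hb)]
    split_ifs <;> simp [(hK (c m)).1 b]

end OneShot

section TwoPhase

variable {A B : Type*} [Fintype A] [Fintype B] {P P' : A → ℝ} {K : A → B → ℝ} {q : B → ℝ}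

/-- Two uses of the channel `K` on a triple `c` of inputs: the first use sends `c.1`, and its output
`y` decides through `s` which of the two other inputs the second use sends. -/
def twoPhase {A B : Type*} (K : A → B → ℝ) (s : A → B → Prop) (c : A × A × A) : B × B → ℝ :=
  joint (K c.1) fun y => K (if s c.1 y then c.2.1 else c.2.2)

lemma IsChannel.twoPhase {A : Type*} {K : A → B → ℝ} (hK : IsChannel K) (s : A → B → Prop) :
    IsChannel (twoPhase K s) :=
  fun c => (hK c.1).joint fun _ => hK _

/-- The law of the triple of inputs of `twoPhase`: independent letters drawn from `P`, `P`
and `P'`. -/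
def triple {A : Type*} (P P' : A → ℝ) : A × A × A → ℝ :=
  joint P fun _ => joint P fun _ => P'

lemma IsDist.triple (hP : IsDist P) (hP' : IsDist P') : IsDist (triple P P') :=
  hP.joint fun _ => hP.joint fun _ => hP'

lemma sum_triple_mul_ite (hP : IsDist P) (hP' : IsDist P') (s : A → Prop) (F : A → A → ℝ) :
    ∑ c, triple P P' c * F c.1 (if s c.1 then c.2.1 else c.2.2) =
      ∑ a, P a * if s a then ∑ w, P w * F a w else ∑ w, P' w * F a w := by
  simp only [triple, joint, Fintype.sum_prod_type, mul_assoc, ← Finset.mul_sum]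
  refine Finset.sum_congr rfl fun a _ => ?_
  split_ifs
  · simp only [← Finset.sum_mul, hP'.2, one_mul]
  · rw [← Finset.sum_mul, hP.2, one_mul]

lemma outDist_twoPhase {B : Type*} {K : A → B → ℝ} {q : B → ℝ} (hP : IsDist P)
    (hP' : IsDist P') (hq : outDist P K = q) (hq' : outDist P' K = q) (s : A → B → Prop)
    (y : B × B) :
    outDist (triple P P') (twoPhase K s) y = q y.1 * q y.2 := by
  have hfactor : ∀ {R : A → ℝ} (a : A), outDist R K = q →
      ∑ w, R w * (K a y.1 * K w y.2) = K a y.1 * q y.2 := fun a hR => by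
    simp only [← hR, outDist, Finset.mul_sum, mul_left_comm]
  calc outDist (triple P P') (twoPhase K s) y
      = ∑ a, P a * if s a y.1 then ∑ w, P w * (K a y.1 * K w y.2)
          else ∑ w, P' w * (K a y.1 * K w y.2) :=
        sum_triple_mul_ite hP hP' (s · y.1) fun a w => K a y.1 * K w y.2
    _ = q y.1 * q y.2 := by
        simp only [hfactor _ hq, hfactor _ hq', ite_self]
        simp only [← mul_assoc, ← Finset.sum_mul]
        rw [← congrFun hq y.1, outDist]

lemma ne_zero_of_joint_ne_zero {B : Type*} {K : A → B → ℝ} {q : B → ℝ} (hP : ∀ a, 0 ≤ P a)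
    (hK : ∀ a b, 0 ≤ K a b) (hq : outDist P K = q) {e : A × B} (h : joint P K e ≠ 0) :
    K e.1 e.2 ≠ 0 ∧ q e.2 ≠ 0 := by
  refine ⟨right_ne_zero_of_mul h, fun h0 => h ?_⟩
  rw [← hq, outDist, Finset.sum_eq_zero_iff_of_nonneg fun a _ => mul_nonneg (hP a) (hK a _)] at h0
  exact h0 e.1 (Finset.mem_univ _)

lemma sum_joint_mul_ite_infoDensity_le (hP : IsDist P) (hP' : IsDist P') (hK : IsChannel K)
    (hq : outDist P K = q) (hq' : outDist P' K = q) {e : A × B} (he : joint P K e ≠ 0) (t : ℝ) :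
    ∑ e', joint P' K e' *
        (if Real.log (K e.1 e.2 * K e'.1 e'.2 / (q e.2 * q e'.2)) ≤ t then 1 else 0) =
      cdf ((hP'.joint hK).law (infoDensity K q) : Measure ℝ) (t - infoDensity K q e) := by
  rw [IsDist.cdf_law]
  refine Finset.sum_congr rfl fun e' _ => ?_
  rcases eq_or_ne (joint P' K e') 0 with h0 | h0
  · rw [h0, zero_mul, zero_mul]
  obtain ⟨hKe, hqe⟩ := ne_zero_of_joint_ne_zero hP.1 (fun a => (hK a).1) hq he
  obtain ⟨hKe', hqe'⟩ := ne_zero_of_joint_ne_zero hP'.1 (fun a => (hK a).1) hq' h0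
  simp only [mul_div_mul_comm, Real.log_mul (div_ne_zero hKe hqe) (div_ne_zero hKe' hqe'),
    infoDensity, le_sub_iff_add_le']

lemma cdf_infoDensity_twoPhase (hP : IsDist P) (hP' : IsDist P') (hK : IsChannel K)
    (hq : outDist P K = q) (hq' : outDist P' K = q) (s : A → B → Prop) (t : ℝ) :
    cdf (((hP.triple hP').joint (hK.twoPhase s)).law
        (infoDensity (twoPhase K s) (outDist (triple P P') (twoPhase K s))) : Measure ℝ) t =
      ∑ e, joint P K e * if s e.1 e.2
        then cdf ((hP.joint hK).law (infoDensity K q) : Measure ℝ) (t - infoDensity K q e)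
        else cdf ((hP'.joint hK).law (infoDensity K q) : Measure ℝ) (t - infoDensity K q e) := by
  let F : B × B → A → A → ℝ := fun y a w => K a y.1 * K w y.2 *
    if Real.log (K a y.1 * K w y.2 / (q y.1 * q y.2)) ≤ t then 1 else 0
  calc _ = ∑ y, ∑ c, triple P P' c * F y c.1 (if s c.1 y.1 then c.2.1 else c.2.2) := by
        rw [IsDist.cdf_law, Fintype.sum_prod_type_right]
        simp only [infoDensity, outDist_twoPhase hP hP' hq hq', joint, F, twoPhase, mul_assoc]
    _ = ∑ y, ∑ a, P a * if s a y.1 then ∑ w, P w * F y a w else ∑ w, P' w * F y a w :=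
        Finset.sum_congr rfl fun y _ => sum_triple_mul_ite hP hP' (s · y.1) (F y)
    _ = ∑ e, joint P K e * if s e.1 e.2
          then ∑ e', joint P K e' *
            (if Real.log (K e.1 e.2 * K e'.1 e'.2 / (q e.2 * q e'.2)) ≤ t then 1 else 0)
          else ∑ e', joint P' K e' *
            (if Real.log (K e.1 e.2 * K e'.1 e'.2 / (q e.2 * q e'.2)) ≤ t then 1 else 0) := by
        simp only [Fintype.sum_prod_type, joint, F]
        rw [Finset.sum_congr rfl fun y _ => Finset.sum_comm, Finset.sum_comm]
        refine Finset.sum_congr rfl fun a _ => Finset.sum_congr rfl fun y _ => ?_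
        rw [← Finset.mul_sum, mul_assoc]
        congr 1
        split_ifs <;>
          · rw [Finset.sum_comm]
            simp only [Finset.mul_sum, mul_assoc, mul_left_comm (K a y)]
    _ = _ := Finset.sum_congr rfl fun e _ => by
        rcases eq_or_ne (joint P K e) 0 with h0 | h0
        · rw [h0, zero_mul, zero_mul]
        rw [sum_joint_mul_ite_infoDensity_le hP hP hK hq hq h0,
          sum_joint_mul_ite_infoDensity_le hP hP' hK hq hq' h0]

end TwoPhase

section Words

variable {W : X → Y → ℝ} {P P' : X → ℝ} {q : Y → ℝ} {N : ℕ}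

/-- The memoryless extension of the channel `W` to words of length `N`. -/
def wordChannel {X Y : Type*} (W : X → Y → ℝ) (N : ℕ) (x : Fin N → X) (y : Fin N → Y) : ℝ :=
  ∏ k, W (x k) (y k)

lemma IsChannel.wordChannel {X : Type*} {W : X → Y → ℝ} (hW : IsChannel W) (N : ℕ) :
    IsChannel (wordChannel W N) := by
  refine fun x => ⟨fun y => Finset.prod_nonneg fun k _ => (hW _).1 _, ?_⟩
  simp only [Paper.wordChannel, ← Fintype.piFinset_univ, ← Finset.prod_univ_sum, (hW _).2,
    Finset.prod_const_one]

lemma outDist_wordChannel {Y : Type*} {W : X → Y → ℝ} {q : Y → ℝ} (hq : outDist P W = q) :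
    outDist (iid P N) (wordChannel W N) = iid q N := by
  funext y
  simp only [outDist, iid, wordChannel, ← Finset.prod_mul_distrib, ← hq,
    Finset.prod_univ_sum, Fintype.piFinset_univ]

/-- A word of letter pairs, read as a pair of words. -/
def unzip {X Y : Type*} (e : Fin N → X × Y) : (Fin N → X) × (Fin N → Y) :=
  Equiv.arrowProdEquivProdArrow _ _ _ e

lemma sum_joint_wordChannel_mul (F : (Fin N → X) × (Fin N → Y) → ℝ) :
    ∑ e, joint (iid P N) (wordChannel W N) e * F e =
      ∑ e, iid (joint P W) N e * F (unzip e) := by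
  rw [← (Equiv.arrowProdEquivProdArrow (Fin N) (fun _ => X) fun _ => Y).sum_comp]
  refine Finset.sum_congr rfl fun e _ => ?_
  simp only [joint, iid, Finset.prod_mul_distrib]
  rfl

lemma infoDensity_unzip {Y : Type*} {W : X → Y → ℝ} {q : Y → ℝ} (hP : ∀ x, 0 ≤ P x)
    (hW : ∀ x y, 0 ≤ W x y) (hq : outDist P W = q)
    {e : Fin N → X × Y} (he : iid (joint P W) N e ≠ 0) :
    infoDensity (wordChannel W N) (iid q N) (unzip e) = ∑ k, infoDensity W q (e k) := by
  have hletter : ∀ k, W (e k).1 (e k).2 / q (e k).2 ≠ 0 := fun k => by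
    obtain ⟨hWk, hqk⟩ := ne_zero_of_joint_ne_zero hP hW hq
      (Finset.prod_ne_zero_iff.1 he k (Finset.mem_univ k))
    exact div_ne_zero hWk hqk
  simp only [infoDensity, ← Real.log_prod fun k _ => hletter k, Finset.prod_div_distrib]
  rfl

/-- The information density of a letter pair, centred at `C` and divided by `σ`. -/
def scaledDensity {X Y : Type*} (W : X → Y → ℝ) (q : Y → ℝ) (C σ : ℝ) (e : X × Y) : ℝ :=
  (infoDensity W q e - C) / σ

lemma sum_infoDensity_eq_normSum {X Y : Type*} (W : X → Y → ℝ) (q : Y → ℝ) (hN : 0 < N) (C : ℝ)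
    {σ : ℝ} (hσ : σ ≠ 0) (e : Fin N → X × Y) :
    ∑ k, infoDensity W q (e k) = N * C + σ * √N * normSum (scaledDensity W q C σ) e := by
  have hs : √(N : ℝ) ≠ 0 := (Real.sqrt_pos.2 (by exact_mod_cast hN)).ne'
  simp only [normSum, scaledDensity, ← Finset.sum_div, Finset.sum_sub_distrib, Finset.sum_const,
    Finset.card_univ, Fintype.card_fin, nsmul_eq_mul]
  field_simp
  ring

lemma cdf_infoDensity_wordChannel (hP : IsDist P) (hW : IsChannel W) (hq : outDist P W = q)
    (hN : 0 < N) (C : ℝ) {σ : ℝ} (hσ : 0 < σ) (t : ℝ) :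
    cdf (((hP.iid N).joint (hW.wordChannel N)).law
        (infoDensity (wordChannel W N) (iid q N)) : Measure ℝ) (N * C + σ * √N * t) =
      cdf (((hP.joint hW).iid N).law (normSum (scaledDensity W q C σ)) : Measure ℝ) t := by
  have hs : 0 < σ * √N := mul_pos hσ (Real.sqrt_pos.2 (by exact_mod_cast hN))
  rw [IsDist.cdf_law, IsDist.cdf_law, sum_joint_wordChannel_mul]
  refine Finset.sum_congr rfl fun e _ => ?_
  rcases eq_or_ne (iid (joint P W) N e) 0 with h0 | h0
  · rw [h0, zero_mul, zero_mul]
  simp only [infoDensity_unzip hP.1 (fun x => (hW x).1) hq h0,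
    sum_infoDensity_eq_normSum W q hN C hσ.ne', add_le_add_iff_left, mul_le_mul_iff_right₀ hs]

end Words

section Feedback

/-- The law of the output word when the symbol sent at each time is the function `enc` of the past
outputs. -/
def feedbackLaw {X Y : Type*} (W : X → Y → ℝ) (enc : List Y → X) (n : ℕ) (y : Fin n → Y) : ℝ :=
  ∏ k : Fin n, W (enc ((List.ofFn y).take (k : ℕ))) (y k)

/-- The feedback encoder of blocklength `N + N` which sends the word `c.1` and then, depending on
whether the first `N` outputs satisfy `s`, the word `c.2.1` or `c.2.2`; later symbols are
arbitrary. -/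
def twoPhaseEnc {X Y : Type*} [Nonempty X] {N : ℕ} (s : (Fin N → X) → (Fin N → Y) → Prop)
    (c : (Fin N → X) × (Fin N → X) × (Fin N → X)) (l : List Y) : X :=
  if h : l.length < N then c.1 ⟨l.length, h⟩
  else if h2 : l.length - N < N then
    (if s c.1 (fun j => l[(j : ℕ)]'(by omega)) then c.2.1 else c.2.2) ⟨l.length - N, h2⟩
  else Classical.arbitrary X

lemma feedbackLaw_twoPhaseEnc {X Y : Type*} [Nonempty X] {N : ℕ} (W : X → Y → ℝ)
    (s : (Fin N → X) → (Fin N → Y) → Prop) (c : (Fin N → X) × (Fin N → X) × (Fin N → X))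
    (y : (Fin N → Y) × (Fin N → Y)) :
    feedbackLaw W (twoPhaseEnc s c) (N + N) (Fin.appendEquiv N N y) =
      twoPhase (wordChannel W N) s c y := by
  obtain ⟨y, z⟩ := y
  change ∏ k : Fin (N + N), W (twoPhaseEnc s c ((List.ofFn (Fin.append y z)).take (k : ℕ)))
      (Fin.append y z k) =
    (∏ k, W (c.1 k) (y k)) * ∏ k, W ((if s c.1 y then c.2.1 else c.2.2) k) (z k)
  rw [Fin.prod_univ_add]
  congr 1 <;> refine Finset.prod_congr rfl fun k _ => ?_
  · have hlen : ((List.ofFn (Fin.append y z)).take (Fin.castAdd N k : ℕ)).length = k := by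
      simp only [List.length_take, List.length_ofFn, Fin.val_castAdd]
      omega
    have hlt := hlen.trans_lt k.2
    rw [Fin.append_left, twoPhaseEnc, dif_pos hlt, show (⟨_, hlt⟩ : Fin N) = k from Fin.ext hlen]
  · have hlen : ((List.ofFn (Fin.append y z)).take (Fin.natAdd N k : ℕ)).length = N + k := by
      simp [add_comm]
    have hpast : (fun j : Fin N =>
        ((List.ofFn (Fin.append y z)).take (Fin.natAdd N k : ℕ))[(j : ℕ)]'(by omega)) = y := by
      funext j
      rw [List.getElem_take, List.getElem_ofFn]
      exact Fin.append_left y z j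
    have hk : (⟨((List.ofFn (Fin.append y z)).take (Fin.natAdd N k : ℕ)).length - N, by omega⟩ :
        Fin N) = k := Fin.ext (by simp only [hlen]; omega)
    rw [Fin.append_right, twoPhaseEnc, dif_neg (by omega), dif_pos (by omega), hpast, hk]

lemma sum_feedbackLaw_succ_mul {X : Type*} {W : X → Y → ℝ} (hW : IsChannel W)
    (enc : List Y → X) {n : ℕ} (h : (Fin n → Y) → ℝ) :
    ∑ y, feedbackLaw W enc (n + 1) y * h (fun k => y k.castSucc) =
      ∑ y, feedbackLaw W enc n y * h y := by
  rw [← (Fin.snocEquiv fun _ => Y).sum_comp, Fintype.sum_prod_type, Finset.sum_comm]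
  refine Finset.sum_congr rfl fun y _ => ?_
  have hsnoc : ∀ z, feedbackLaw W enc (n + 1) (Fin.snoc y z) =
      feedbackLaw W enc n y * W (enc (List.ofFn y)) z := by
    intro z
    have hofFn : List.ofFn (Fin.snoc y z : Fin (n + 1) → Y) = List.ofFn y ++ [z] := by
      rw [List.ofFn_succ_last]
      simp
    have htake : ∀ k ≤ n, (List.ofFn y ++ [z]).take k = (List.ofFn y).take k := fun k hk =>
      List.take_append_of_le_length (by simpa using hk)
    simp only [feedbackLaw]
    rw [Fin.prod_univ_castSucc, hofFn]
    simp only [Fin.snoc_castSucc, Fin.snoc_last, Fin.val_castSucc, Fin.val_last]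
    rw [htake n le_rfl, List.take_of_length_le (l := List.ofFn y) (by simp),
      Finset.prod_congr rfl fun (k : Fin n) _ => by rw [htake k k.2.le]]
  calc _ = ∑ z, feedbackLaw W enc n y * W (enc (List.ofFn y)) z * h y :=
        Finset.sum_congr rfl fun z _ => by
          simp only [← hsnoc, Fin.snocEquiv_apply, Fin.snoc_castSucc]
          rfl
    _ = feedbackLaw W enc n y * h y := by
        rw [← Finset.sum_mul, ← Finset.mul_sum, (hW _).2, mul_one]

lemma isDist_feedbackLaw {X : Type*} {W : X → Y → ℝ} (hW : IsChannel W)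
    (enc : List Y → X) (n : ℕ) : IsDist (feedbackLaw W enc n) := by
  refine ⟨fun y => Finset.prod_nonneg fun k _ => (hW _).1 _, ?_⟩
  induction n with
  | zero => simp [feedbackLaw]
  | succ n ih => simpa only [mul_one, ih] using sum_feedbackLaw_succ_mul hW enc (n := n) fun _ => 1

lemma errProb_eq_sum_feedbackLaw {X : Type*} (W : X → Y → ℝ) {n M : ℕ}
    (enc : Fin M → List Y → X) (dec : (Fin n → Y) → Fin M) :
    errProb W n M enc dec =
      (M : ℝ)⁻¹ * ∑ m, ∑ y, feedbackLaw W (enc m) n y * (if dec y = m then 0 else 1) :=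
  rfl

lemma exists_errProb_succ_eq {X : Type*} {W : X → Y → ℝ} (hW : IsChannel W) {n M : ℕ}
    (enc : Fin M → List Y → X) (dec : (Fin n → Y) → Fin M) :
    ∃ dec' : (Fin (n + 1) → Y) → Fin M, errProb W (n + 1) M enc dec' = errProb W n M enc dec := by
  refine ⟨fun y => dec fun k => y k.castSucc, ?_⟩
  simp only [errProb_eq_sum_feedbackLaw]
  congr 1
  exact Finset.sum_congr rfl fun m _ =>
    sum_feedbackLaw_succ_mul hW (enc m) fun y => if dec y = m then 0 else 1

lemma errProb_nonneg {X : Type*} {W : X → Y → ℝ} (hW : IsChannel W) {n M : ℕ}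
    (enc : Fin M → List Y → X) (dec : (Fin n → Y) → Fin M) : 0 ≤ errProb W n M enc dec := by
  rw [errProb_eq_sum_feedbackLaw]
  refine mul_nonneg (by positivity) (Finset.sum_nonneg fun m _ => Finset.sum_nonneg fun y _ =>
    mul_nonneg ((isDist_feedbackLaw hW _ n).1 y) ?_)
  split_ifs <;> norm_num

-- Each output word is decoded correctly for at most one message.
lemma one_sub_div_le_errProb {X : Type*} {W : X → Y → ℝ} (hW : IsChannel W)
    {n M : ℕ} (hM : 0 < M) (enc : Fin M → List Y → X) (dec : (Fin n → Y) → Fin M) :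
    1 - Fintype.card (Fin n → Y) / M ≤ errProb W n M enc dec := by
  have hM' : (0 : ℝ) < M := by exact_mod_cast hM
  have hmsg : ∀ m : Fin M, 1 - ∑ y : Fin n → Y, (if dec y = m then (1 : ℝ) else 0) ≤
      ∑ y, feedbackLaw W (enc m) n y * (if dec y = m then 0 else 1) := by
    intro m
    obtain ⟨hnonneg, hsum⟩ := isDist_feedbackLaw hW (enc m) n
    refine sub_le_iff_le_add.2 (hsum.ge.trans ?_)
    rw [← Finset.sum_add_distrib]
    refine Finset.sum_le_sum fun y _ => ?_
    have hle : feedbackLaw W (enc m) n y ≤ 1 :=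
      hsum ▸ Finset.single_le_sum (fun y _ => hnonneg y) (Finset.mem_univ y)
    split_ifs <;> linarith
  have hsum := Finset.sum_le_sum fun m (_ : m ∈ Finset.univ) => hmsg m
  rw [Finset.sum_sub_distrib, Finset.sum_comm] at hsum
  simp only [Finset.sum_ite_eq, Finset.mem_univ, if_true, Finset.sum_const, Finset.card_univ,
    Fintype.card_fin, nsmul_eq_mul, mul_one] at hsum
  rw [errProb_eq_sum_feedbackLaw, le_inv_mul_iff₀ hM', mul_sub, mul_one, mul_div_cancel₀ _ hM'.ne']
  exact hsum

variable {W : X → Y → ℝ} {P P' : X → ℝ} {q : Y → ℝ} {N : ℕ}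

lemma exists_twoPhase_code (hW : IsChannel W) (hP : IsDist P) (hP' : IsDist P')
    (s : (Fin N → X) → (Fin N → Y) → Prop) (t : ℝ) {M : ℕ} (hM : 0 < M) :
    ∃ (enc : Fin M → List Y → X) (dec : (Fin (N + N) → Y) → Fin M),
      errProb W (N + N) M enc dec ≤
        cdf ((((hP.iid N).triple (hP'.iid N)).joint ((hW.wordChannel N).twoPhase s)).law
          (infoDensity (twoPhase (wordChannel W N) s)
            (outDist (triple (iid P N) (iid P' N)) (twoPhase (wordChannel W N) s))) :
              Measure ℝ) t + M * Real.exp (-t) := by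
  have := hP.nonempty
  have hM' : (0 : ℝ) < M := by exact_mod_cast hM
  obtain ⟨c, dec, herr⟩ := exists_code_of_cdf_infoDensity ((hP.iid N).triple (hP'.iid N))
    ((hW.wordChannel N).twoPhase s) t hM
  refine ⟨fun m => twoPhaseEnc s (c m), fun y => dec ((Fin.appendEquiv N N).symm y), ?_⟩
  have hmsg : ∀ m, ∑ y, feedbackLaw W (twoPhaseEnc s (c m)) (N + N) y *
      (if dec ((Fin.appendEquiv N N).symm y) = m then 0 else 1) ≤ _ := fun m => by
    refine le_trans (le_of_eq ?_) (herr m)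
    rw [← (Fin.appendEquiv N N).sum_comp]
    simp only [Equiv.symm_apply_apply, feedbackLaw_twoPhaseEnc]
  rw [errProb_eq_sum_feedbackLaw, inv_mul_le_iff₀ hM']
  refine (Finset.sum_le_sum fun m _ => hmsg m).trans (le_of_eq ?_)
  rw [Finset.sum_const, Finset.card_univ, Fintype.card_fin, nsmul_eq_mul]

-- The second phase uses the codeword drawn from `P` if the normalised information density of the
-- first phase reached `a`, and the one drawn from `P'` otherwise.
theorem exists_code_errProb_le_switchErr (hW : IsChannel W) (hP : IsDist P) (hP' : IsDist P')
    (hq : outDist P W = q) (hq' : outDist P' W = q) (C a : ℝ) {σ σ' : ℝ} (hσ : 0 < σ)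
    (hσ' : 0 < σ') (hN : 0 < N) {M : ℕ} (hM : 0 < M) :
    ∃ (enc : Fin M → List Y → X) (dec : (Fin (N + N) → Y) → Fin M),
      errProb W (N + N) M enc dec ≤
        ∑ e, iid (joint P W) N e * switchErr
          (cdf (((hP.joint hW).iid N).law (normSum (scaledDensity W q C σ)) : Measure ℝ))
          (cdf (((hP'.joint hW).iid N).law (normSum (scaledDensity W q C σ')) : Measure ℝ))
          (σ / σ') a (normSum (scaledDensity W q C σ) e) +
        M * Real.exp (-(2 * N * C + σ * √N * a)) := by
  let g := scaledDensity W q C σ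
  obtain ⟨enc, dec, herr⟩ := exists_twoPhase_code hW hP hP'
    (fun x y => a ≤ normSum g fun k => (x k, y k)) (2 * N * C + σ * √N * a) hM
  refine ⟨enc, dec, herr.trans (le_of_eq ?_)⟩
  rw [cdf_infoDensity_twoPhase (hP.iid N) (hP'.iid N) (hW.wordChannel N) (outDist_wordChannel hq)
    (outDist_wordChannel hq'), sum_joint_wordChannel_mul]
  congr 1
  refine Finset.sum_congr rfl fun e _ => ?_
  rcases eq_or_ne (iid (joint P W) N e) 0 with h0 | h0
  · rw [h0, zero_mul, zero_mul]
  rw [infoDensity_unzip hP.1 (fun x => (hW x).1) hq h0,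
    sum_infoDensity_eq_normSum W q hN C hσ.ne']
  have hrest : 2 * N * C + σ * √N * a - (N * C + σ * √N * normSum g e) =
      N * C + σ * √N * (a - normSum g e) := by ring
  have hrest' : N * C + σ * √N * (a - normSum g e) =
      N * C + σ' * √N * (σ / σ' * (a - normSum g e)) := by field_simp
  rw [hrest, cdf_infoDensity_wordChannel hP hW hq hN C hσ, hrest',
    cdf_infoDensity_wordChannel hP' hW hq' hN C hσ']
  rfl

end Feedback

section RelEntropy

variable {p q : Y → ℝ}

/-- Relative entropy of two mass functions on a finite alphabet; it is meaningful only when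
`q y = 0` implies `p y = 0`, because `Real.log (p y / 0) = 0`. -/
def relEntropy (p q : Y → ℝ) : ℝ := ∑ y, p y * Real.log (p y / q y)

lemma relEntropy_self (q : Y → ℝ) : relEntropy q q = 0 := by
  refine Finset.sum_eq_zero fun y _ => ?_
  rcases eq_or_ne (q y) 0 with hy | hy
  · rw [hy, zero_mul]
  · rw [div_self hy, Real.log_one, mul_zero]

lemma relEntropy_eq_sum_klFun (hp : IsDist p) (hq : IsDist q) (h : ∀ y, q y = 0 → p y = 0) :
    relEntropy p q = ∑ y, q y * InformationTheory.klFun (p y / q y) := by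
  have hterm : ∀ y, q y * InformationTheory.klFun (p y / q y) =
      p y * Real.log (p y / q y) + q y - p y := by
    intro y
    rcases eq_or_ne (q y) 0 with hy | hy
    · simp [hy, h y hy]
    · rw [InformationTheory.klFun]
      field_simp
  simp only [hterm, Finset.sum_sub_distrib, Finset.sum_add_distrib, hp.2, hq.2, relEntropy]
  ring

lemma mul_klFun_nonneg (hp : IsDist p) (hq : IsDist q) (y : Y) :
    0 ≤ q y * InformationTheory.klFun (p y / q y) :=
  mul_nonneg (hq.1 y) (InformationTheory.klFun_nonneg (div_nonneg (hp.1 y) (hq.1 y)))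

lemma relEntropy_nonneg (hp : IsDist p) (hq : IsDist q) (h : ∀ y, q y = 0 → p y = 0) :
    0 ≤ relEntropy p q := by
  rw [relEntropy_eq_sum_klFun hp hq h]
  exact Finset.sum_nonneg fun y _ => mul_klFun_nonneg hp hq y

lemma eq_of_relEntropy_nonpos (hp : IsDist p) (hq : IsDist q) (h : ∀ y, q y = 0 → p y = 0)
    (h0 : relEntropy p q ≤ 0) : p = q := by
  have hzero := h0.antisymm (relEntropy_nonneg hp hq h)
  rw [relEntropy_eq_sum_klFun hp hq h,
    Finset.sum_eq_zero_iff_of_nonneg fun y _ => mul_klFun_nonneg hp hq y] at hzero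
  funext y
  rcases mul_eq_zero.1 (hzero y (Finset.mem_univ y)) with hy | hy
  · rw [hy, h y hy]
  · rw [InformationTheory.klFun_eq_zero_iff (div_nonneg (hp.1 y) (hq.1 y))] at hy
    exact eq_of_div_eq_one hy

lemma continuousAt_relEntropy (h : ∀ y, q y = 0 → p y = 0) : ContinuousAt (relEntropy p) q := by
  refine tendsto_finsetSum _ fun y _ => ?_
  rcases eq_or_ne (p y) 0 with hp | hp
  · simp only [hp, zero_mul]
    exact tendsto_const_nhds
  · have hq : q y ≠ 0 := fun hq => hp (h y hq)
    exact ((continuousAt_const.div (continuous_apply y).continuousAt hq).log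
      (div_ne_zero hp hq)).const_mul (p y)

end RelEntropy

section Capacity

variable {W : X → Y → ℝ} {P R : X → ℝ}

lemma IsDist.outDist (hP : IsDist P) (hW : IsChannel W) : IsDist (outDist P W) := by
  refine ⟨outDist_nonneg hP.1 fun x => (hW x).1, ?_⟩
  unfold Paper.outDist
  rw [Finset.sum_comm]
  simp only [← Finset.mul_sum, (hW _).2, mul_one, hP.2]

lemma mul_le_outDist (hP : IsDist P) (hW : IsChannel W) (x : X) (y : Y) :
    P x * W x y ≤ outDist P W y :=
  Finset.single_le_sum (f := fun x => P x * W x y)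
    (fun x _ => mul_nonneg (hP.1 x) ((hW x).1 y)) (Finset.mem_univ x)

lemma sum_mul_relEntropy (hP : IsDist P) (hW : IsChannel W) {q : Y → ℝ}
    (hq : ∀ y, q y = 0 → outDist P W y = 0) :
    ∑ x, P x * relEntropy (W x) q = mutInfo P W + relEntropy (outDist P W) q := by
  have hout : relEntropy (outDist P W) q =
      ∑ x, ∑ y, P x * W x y * Real.log (outDist P W y / q y) := by
    rw [Finset.sum_comm]
    exact Finset.sum_congr rfl fun y _ => by rw [← Finset.sum_mul, outDist]
  rw [hout, mutInfo]
  simp only [relEntropy, Finset.mul_sum, ← Finset.sum_add_distrib]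
  refine Finset.sum_congr rfl fun x _ => Finset.sum_congr rfl fun y _ => ?_
  rw [← mul_assoc, ← mul_add]
  rcases eq_or_ne (P x * W x y) 0 with h0 | h0
  · rw [h0, zero_mul, zero_mul]
  · obtain ⟨hWy, houty⟩ := ne_zero_of_joint_ne_zero hP.1 (fun x => (hW x).1) rfl (e := (x, y)) h0
    have hqy : q y ≠ 0 := fun h => houty (hq y h)
    rw [Real.log_div hWy hqy, Real.log_div hWy houty, Real.log_div houty hqy]
    ring

lemma outDist_smul_add_smul {X Y : Type*} [Fintype X] (P R : X → ℝ) (W : X → Y → ℝ) (a b : ℝ) :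
    outDist (a • P + b • R) W = a • outDist P W + b • outDist R W := by
  funext y
  simp only [outDist, Pi.add_apply, Pi.smul_apply, smul_eq_mul, add_mul, Finset.sum_add_distrib,
    Finset.mul_sum, mul_assoc]

lemma IsDist.smul_add_smul {X : Type*} [Fintype X] {P R : X → ℝ} (hP : IsDist P) (hR : IsDist R)
    {a b : ℝ} (ha : 0 ≤ a) (hb : 0 ≤ b) (hab : a + b = 1) : IsDist (a • P + b • R) :=
  convex_stdSimplex ℝ X hP hR ha hb hab

lemma eq_zero_of_smul_add_smul_eq_zero {Y : Type*} {p r : Y → ℝ} (hp : ∀ y, 0 ≤ p y)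
    (hr : ∀ y, 0 ≤ r y) {a b : ℝ} (ha : 0 < a) (hb : 0 < b) {y : Y}
    (h : (a • p + b • r) y = 0) : p y = 0 ∧ r y = 0 := by
  simpa [add_eq_zero_iff_of_nonneg (mul_nonneg ha.le (hp y)) (mul_nonneg hb.le (hr y)), ha.ne',
    hb.ne'] using h

lemma mutInfo_smul_add_smul (hP : IsDist P) (hR : IsDist R) (hW : IsChannel W) {a b : ℝ}
    (ha : 0 < a) (hb : 0 < b) (hab : a + b = 1) :
    mutInfo (a • P + b • R) W =
      a * (mutInfo P W + relEntropy (outDist P W) (a • outDist P W + b • outDist R W)) +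
        b * (mutInfo R W + relEntropy (outDist R W) (a • outDist P W + b • outDist R W)) := by
  have hsupp := fun y => eq_zero_of_smul_add_smul_eq_zero (hP.outDist hW).1 (hR.outDist hW).1 ha hb
    (y := y)
  have hmix := sum_mul_relEntropy (hP.smul_add_smul hR ha.le hb.le hab) hW fun _ h => h
  rw [relEntropy_self, add_zero, outDist_smul_add_smul] at hmix
  rw [← hmix, ← sum_mul_relEntropy hP hW fun y hy => (hsupp y hy).1,
    ← sum_mul_relEntropy hR hW fun y hy => (hsupp y hy).2]
  simp only [Pi.add_apply, Pi.smul_apply, smul_eq_mul, add_mul, Finset.sum_add_distrib,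
    Finset.mul_sum, mul_assoc]

lemma mul_log_div_outDist_le_one (hP : IsDist P) (hW : IsChannel W) (x : X) (y : Y) :
    P x * W x y * Real.log (W x y / outDist P W y) ≤ 1 := by
  have hle := mul_le_outDist hP hW x y
  have hout := outDist_nonneg hP.1 (fun x => (hW x).1) y
  have hWy := (hW x).1 y
  have hW1 : W x y ≤ 1 :=
    (hW x).2 ▸ Finset.single_le_sum (fun y _ => (hW x).1 y) (Finset.mem_univ y)
  calc P x * W x y * Real.log (W x y / outDist P W y)
      ≤ P x * W x y * (W x y / outDist P W y) := by
        refine mul_le_mul_of_nonneg_left ?_ (mul_nonneg (hP.1 x) hWy)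
        linarith [Real.log_le_self (div_nonneg hWy hout)]
    _ = W x y * (P x * W x y / outDist P W y) := by ring
    _ ≤ 1 :=
      mul_le_one₀ hW1 (div_nonneg (mul_nonneg (hP.1 x) hWy) hout) (div_le_one_of_le₀ hle hout)

lemma mutInfo_le_capacity (hP : IsDist P) (hW : IsChannel W) : mutInfo P W ≤ capacity W := by
  refine le_csSup ⟨∑ _x : X, ∑ _y : Y, 1, ?_⟩ ⟨P, hP, rfl⟩
  rintro _ ⟨R, hR, rfl⟩
  exact Finset.sum_le_sum fun x _ => Finset.sum_le_sum fun y _ =>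
    mul_log_div_outDist_le_one hR hW x y

-- By strict concavity, the midpoint of two achievers with different output distributions would
-- exceed capacity.
lemma outDist_eq_of_mem_capacityAchievers (hW : IsChannel W) (hP : P ∈ capacityAchievers W)
    (hR : R ∈ capacityAchievers W) : outDist P W = outDist R W := by
  have hhalf : (0 : ℝ) < 1 / 2 := one_half_pos
  have hPout := hP.1.outDist hW
  have hRout := hR.1.outDist hW
  have hsupp := fun y => eq_zero_of_smul_add_smul_eq_zero hPout.1 hRout.1 hhalf hhalf (y := y)
  have hmid := hPout.smul_add_smul hRout hhalf.le hhalf.le (add_halves 1)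
  have hle := mutInfo_le_capacity (hP.1.smul_add_smul hR.1 hhalf.le hhalf.le (add_halves 1)) hW
  rw [mutInfo_smul_add_smul hP.1 hR.1 hW hhalf hhalf (add_halves 1), hP.2, hR.2] at hle
  have hDP := relEntropy_nonneg hPout hmid fun y hy => (hsupp y hy).1
  have hDR := relEntropy_nonneg hRout hmid fun y hy => (hsupp y hy).2
  rw [eq_of_relEntropy_nonpos hPout hmid (fun y hy => (hsupp y hy).1) (by linarith)]
  exact (eq_of_relEntropy_nonpos hRout hmid (fun y hy => (hsupp y hy).2) (by linarith)).symm

lemma outDist_eq_qStar (hW : IsChannel W) (hP : P ∈ capacityAchievers W) :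
    outDist P W = qStar W := by
  have h : (capacityAchievers W).Nonempty := ⟨P, hP⟩
  rw [qStar, dif_pos h]
  exact outDist_eq_of_mem_capacityAchievers hW hP h.choose_spec

lemma sum_mul_relEntropy_qStar (hW : IsChannel W) (hP : P ∈ capacityAchievers W) :
    ∑ x, P x * relEntropy (W x) (qStar W) = capacity W := by
  rw [sum_mul_relEntropy hP.1 hW fun y hy => by rw [outDist_eq_qStar hW hP, hy],
    outDist_eq_qStar hW hP, relEntropy_self, add_zero]
  exact hP.2

lemma outDist_single {Y : Type*} (W : X → Y → ℝ) (x : X) : outDist (Pi.single x 1) W = W x := by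
  funext y
  simp [outDist, Pi.single_apply]

lemma mutInfo_single (W : X → Y → ℝ) (x : X) : mutInfo (Pi.single x 1) W = 0 := by
  rw [← relEntropy_self (W x), mutInfo, outDist_single]
  simp [Pi.single_apply, relEntropy]

lemma relEntropy_mix_le_capacity (hW : IsChannel W) (hP : P ∈ capacityAchievers W) (x : X) {t : ℝ}
    (ht : t ∈ Ioo 0 1) :
    relEntropy (W x) ((1 - t) • qStar W + t • W x) ≤ capacity W := by
  have ht' := sub_pos.2 ht.2
  have hq : IsDist (qStar W) := outDist_eq_qStar hW hP ▸ hP.1.outDist hW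
  have hx : IsDist (Pi.single x (1 : ℝ)) := single_mem_stdSimplex ℝ x
  have hle := mutInfo_le_capacity (hP.1.smul_add_smul hx ht'.le ht.1.le (sub_add_cancel 1 t)) hW
  rw [mutInfo_smul_add_smul hP.1 hx hW ht' ht.1 (sub_add_cancel 1 t), mutInfo_single, zero_add,
    outDist_single, outDist_eq_qStar hW hP, hP.2] at hle
  have hnonneg := relEntropy_nonneg hq
    (hq.smul_add_smul (hW x) ht'.le ht.1.le (sub_add_cancel 1 t)) fun y hy =>
      (eq_zero_of_smul_add_smul_eq_zero hq.1 (hW x).1 ht' ht.1 hy).1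
  refine le_of_mul_le_mul_left ?_ ht.1
  linarith [mul_nonneg ht'.le hnonneg]

lemma relEntropy_qStar_le (hW : IsChannel W) (hP : P ∈ capacityAchievers W) {x : X}
    (hx : P x ≠ 0) : relEntropy (W x) (qStar W) ≤ capacity W := by
  have hsupp : ∀ y, qStar W y = 0 → W x y = 0 := fun y hy => by
    by_contra h
    exact (ne_zero_of_joint_ne_zero hP.1.1 (fun x => (hW x).1) (outDist_eq_qStar hW hP)
      (e := (x, y)) (mul_ne_zero hx h)).2 hy
  have hmix : Continuous fun t : ℝ => (1 - t) • qStar W + t • W x := by fun_prop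
  have hlim : Tendsto (fun t : ℝ => relEntropy (W x) ((1 - t) • qStar W + t • W x))
      (nhdsWithin 0 (Ioi 0)) (nhds (relEntropy (W x) (qStar W))) := by
    refine (continuousAt_relEntropy hsupp).tendsto.comp ?_
    simpa using (hmix.tendsto 0).mono_left nhdsWithin_le_nhds
  refine le_of_tendsto hlim ?_
  filter_upwards [Ioo_mem_nhdsGT (zero_lt_one (α := ℝ))] with t ht
  exact relEntropy_mix_le_capacity hW hP x ht

theorem relEntropy_qStar_eq (hW : IsChannel W) (hP : P ∈ capacityAchievers W) {x : X}
    (hx : P x ≠ 0) : relEntropy (W x) (qStar W) = capacity W := by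
  have hnonneg : ∀ z ∈ Finset.univ, 0 ≤ P z * (capacity W - relEntropy (W z) (qStar W)) := by
    intro z _
    rcases eq_or_ne (P z) 0 with hz | hz
    · rw [hz, zero_mul]
    · exact mul_nonneg (hP.1.1 z) (sub_nonneg.2 (relEntropy_qStar_le hW hP hz))
  have hsum : ∑ z, P z * (capacity W - relEntropy (W z) (qStar W)) = 0 := by
    simp only [mul_sub, Finset.sum_sub_distrib, sum_mul_relEntropy_qStar hW hP, ← Finset.sum_mul,
      hP.1.2, one_mul, sub_self]
  have hzero := (Finset.sum_eq_zero_iff_of_nonneg hnonneg).1 hsum x (Finset.mem_univ x)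
  exact (sub_eq_zero.1 ((mul_eq_zero.1 hzero).resolve_left hx)).symm

end Capacity

section Dispersion

variable {W : X → Y → ℝ} {P : X → ℝ}

lemma isCompact_capacityAchievers (hW : IsChannel W) : IsCompact (capacityAchievers W) := by
  have heq : capacityAchievers W = stdSimplex ℝ X ∩
      {R | outDist R W = qStar W ∧ ∑ x, R x * relEntropy (W x) (qStar W) = capacity W} := by
    ext R
    refine ⟨fun hR => ⟨hR.1, outDist_eq_qStar hW hR, sum_mul_relEntropy_qStar hW hR⟩, ?_⟩
    rintro ⟨hR, hout, hsum⟩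
    have hcomp := sum_mul_relEntropy hR hW (q := qStar W) fun y hy => by rw [hout, hy]
    rw [hout, relEntropy_self, hsum, add_zero] at hcomp
    exact ⟨hR, hcomp.symm⟩
  rw [heq]
  refine (isCompact_stdSimplex ℝ X).inter_right (IsClosed.inter ?_ ?_)
  · refine isClosed_eq (continuous_pi fun y => ?_) continuous_const
    unfold outDist
    fun_prop
  · exact isClosed_eq (by fun_prop) continuous_const

lemma isLeast_Vmin (hW : IsChannel W) (hne : (capacityAchievers W).Nonempty) :
    IsLeast {v | ∃ P ∈ capacityAchievers W, v = ∑ x, P x * nu W x} (Vmin W) := by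
  obtain ⟨P, hP, hmin⟩ := (isCompact_capacityAchievers hW).exists_isMinOn hne
    (f := fun P => ∑ x, P x * nu W x) (by fun_prop)
  have hleast : IsLeast {v | ∃ P ∈ capacityAchievers W, v = ∑ x, P x * nu W x}
      (∑ x, P x * nu W x) :=
    ⟨⟨P, hP, rfl⟩, by rintro _ ⟨R, hR, rfl⟩; exact hmin hR⟩
  rwa [Vmin, hleast.csInf_eq]

lemma isGreatest_Vmax (hW : IsChannel W) (hne : (capacityAchievers W).Nonempty) :
    IsGreatest {v | ∃ P ∈ capacityAchievers W, v = ∑ x, P x * nu W x} (Vmax W) := by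
  obtain ⟨P, hP, hmax⟩ := (isCompact_capacityAchievers hW).exists_isMaxOn hne
    (f := fun P => ∑ x, P x * nu W x) (by fun_prop)
  have hgreatest : IsGreatest {v | ∃ P ∈ capacityAchievers W, v = ∑ x, P x * nu W x}
      (∑ x, P x * nu W x) :=
    ⟨⟨P, hP, rfl⟩, by rintro _ ⟨R, hR, rfl⟩; exact hmax hR⟩
  rwa [Vmax, hgreatest.csSup_eq]

lemma capacityAchievers_nonempty_of_Vmin_pos (hV : 0 < Vmin W) :
    (capacityAchievers W).Nonempty := by
  by_contra h
  rw [not_nonempty_iff_eq_empty] at h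
  simp [Vmin, h] at hV

lemma Vmin_le_Vmax (hW : IsChannel W) (hV : 0 < Vmin W) : Vmin W ≤ Vmax W := by
  have hne := capacityAchievers_nonempty_of_Vmin_pos hV
  exact (isLeast_Vmin hW hne).2 (isGreatest_Vmax hW hne).1

lemma sum_joint_mul_scaledDensity (hW : IsChannel W) (hP : P ∈ capacityAchievers W) (σ : ℝ) :
    ∑ e, joint P W e * scaledDensity W (qStar W) (capacity W) σ e = 0 := by
  rw [Fintype.sum_prod_type]
  refine Finset.sum_eq_zero fun x _ => ?_
  rcases eq_or_ne (P x) 0 with hx | hx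
  · simp [joint, hx]
  calc ∑ y, joint P W (x, y) * scaledDensity W (qStar W) (capacity W) σ (x, y)
      = P x / σ * (relEntropy (W x) (qStar W) - (∑ y, W x y) * capacity W) := by
        rw [relEntropy, Finset.sum_mul, ← Finset.sum_sub_distrib, Finset.mul_sum]
        exact Finset.sum_congr rfl fun y _ => by rw [joint, scaledDensity, infoDensity]; ring
    _ = 0 := by rw [relEntropy_qStar_eq hW hP hx, (hW x).2, one_mul, sub_self, mul_zero]

lemma sum_joint_mul_scaledDensity_sq (hW : IsChannel W) (hP : P ∈ capacityAchievers W) {V : ℝ}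
    (hV : 0 < V) (hPV : V = ∑ x, P x * nu W x) :
    ∑ e, joint P W e * scaledDensity W (qStar W) (capacity W) (√V) e ^ 2 = 1 := by
  have hletter : ∀ x, ∑ y, joint P W (x, y) *
      scaledDensity W (qStar W) (capacity W) (√V) (x, y) ^ 2 = P x * nu W x / V := by
    intro x
    rcases eq_or_ne (P x) 0 with hx | hx
    · simp [joint, hx]
    have hmean : ∑ y, W x y * iStar W x y = capacity W := relEntropy_qStar_eq hW hP hx
    calc _ = P x / V * (∑ y, W x y * iStar W x y ^ 2 - 2 * capacity W * ∑ y, W x y * iStar W x y +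
            capacity W ^ 2 * ∑ y, W x y) := by
          simp only [Finset.mul_sum, ← Finset.sum_sub_distrib, ← Finset.sum_add_distrib]
          refine Finset.sum_congr rfl fun y _ => ?_
          rw [joint, scaledDensity, div_pow, Real.sq_sqrt hV.le, infoDensity, iStar]
          ring
      _ = P x * nu W x / V := by
          rw [nu, hmean, (hW x).2]
          ring
  rw [Fintype.sum_prod_type]
  simp only [hletter]
  rw [← Finset.sum_div, ← hPV, div_self hV.ne']

end Dispersion

section SecondOrder

variable {W : X → Y → ℝ}

-- `liminf` of a real sequence is `0` when its eventual lower bounds are unbounded, whence `r ≤ 0`.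
lemma le_liminf_of_forall_sub_le {v : ℕ → ℝ} {r : ℝ} (hr : r ≤ 0)
    (h : ∀ δ > 0, ∀ᶠ n in atTop, r - δ ≤ v n) : r ≤ liminf v atTop := by
  rw [Filter.liminf_eq]
  by_cases hb : BddAbove {a | ∀ᶠ n in atTop, a ≤ v n}
  · exact le_of_forall_sub_le fun δ hδ => le_csSup hb (h δ hδ)
  · rwa [Real.sSup_of_not_bddAbove hb]

lemma ceil_exp_pos (x : ℝ) : 0 < ⌈Real.exp x⌉₊ := Nat.ceil_pos.2 (Real.exp_pos x)

lemma minErr_le_errProb {X : Type*} {W : X → Y → ℝ} (hW : IsChannel W) {n : ℕ} {R : ℝ}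
    (enc : Fin ⌈Real.exp (n * R)⌉₊ → List Y → X)
    (dec : (Fin n → Y) → Fin ⌈Real.exp (n * R)⌉₊) :
    minErr W n R ≤ errProb W n _ enc dec := by
  refine csInf_le ⟨0, ?_⟩ ⟨enc, dec, rfl⟩
  rintro _ ⟨enc, dec, rfl⟩
  exact errProb_nonneg hW enc dec

lemma one_sub_div_le_minErr {X : Type*} [Nonempty X] {W : X → Y → ℝ} (hW : IsChannel W) (n : ℕ)
    (R : ℝ) : 1 - Fintype.card (Fin n → Y) / (⌈Real.exp (n * R)⌉₊ : ℝ) ≤ minErr W n R := by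
  have hM := ceil_exp_pos (n * R)
  refine le_csInf ⟨_, fun _ _ => Classical.arbitrary X, fun _ => ⟨0, hM⟩, rfl⟩ ?_
  rintro _ ⟨enc, dec, rfl⟩
  exact one_sub_div_le_errProb hW hM enc dec

lemma ceil_exp_le_Mfb {X : Type*} [Nonempty X] {W : X → Y → ℝ} (hW : IsChannel W) {n : ℕ}
    {ε R : ℝ} (hε : ε < 1) (h : minErr W n R ≤ ε) : (⌈Real.exp (n * R)⌉₊ : ℝ) ≤ Mfb W n ε := by
  refine le_csSup ⟨Fintype.card (Fin n → Y) / (1 - ε), ?_⟩ ⟨R, rfl, h⟩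
  rintro _ ⟨S, rfl, hS⟩
  have hM : (0 : ℝ) < ⌈Real.exp (n * S)⌉₊ := by exact_mod_cast ceil_exp_pos (n * S)
  have hle := (one_sub_div_le_minErr hW n S).trans hS
  rw [sub_le_comm, le_div_iff₀ hM] at hle
  rwa [le_div_iff₀ (sub_pos.2 hε), mul_comm]

lemma mul_add_div_sqrt (n : ℕ) (C r : ℝ) : n * (C + r / √n) = n * C + √n * r := by
  rw [mul_add, mul_div_left_comm, Real.div_sqrt, mul_comm r]

lemma le_SOfb {X : Type*} [Fintype X] [Nonempty X] {W : X → Y → ℝ} (hW : IsChannel W) {n : ℕ}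
    (hn : 0 < n) {ε r : ℝ} (hε : ε < 1) (h : minErr W n (capacity W + r / √n) ≤ ε) :
    r ≤ SOfb W ε n := by
  have hs : 0 < √n := Real.sqrt_pos.2 (by exact_mod_cast hn)
  have hM := (Nat.le_ceil _).trans (ceil_exp_le_Mfb hW hε h)
  rw [SOfb, le_div_iff₀ hs, le_sub_iff_add_le,
    Real.le_log_iff_exp_le ((Real.exp_pos _).trans_le hM)]
  rwa [add_comm, mul_comm r, ← mul_add_div_sqrt]

lemma errProb_eq_zero_of_le_one {X Y : Type*} [Fintype Y] (W : X → Y → ℝ) {n M : ℕ}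
    (hM : M ≤ 1) (enc : Fin M → List Y → X) (dec : (Fin n → Y) → Fin M) :
    errProb W n M enc dec = 0 := by
  have : Subsingleton (Fin M) := Fin.subsingleton_iff_le_one.2 hM
  rw [errProb, Finset.sum_eq_zero, mul_zero]
  refine fun m _ => Finset.sum_eq_zero fun y _ => ?_
  rw [if_pos (Subsingleton.elim _ _), mul_zero]

lemma minErr_le_of_forall {X : Type*} [Nonempty X] {W : X → Y → ℝ} (hW : IsChannel W) {n : ℕ}
    {ε R : ℝ} (hε : 0 ≤ ε)
    (h : ∀ M : ℕ, 0 < M → (M : ℝ) ≤ 2 * Real.exp (n * R) →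
      ∃ (enc : Fin M → List Y → X) (dec : (Fin n → Y) → Fin M), errProb W n M enc dec ≤ ε) :
    minErr W n R ≤ ε := by
  have hpos := ceil_exp_pos (n * R)
  rcases le_or_gt (n * R) 0 with hR | hR
  · have hM : ⌈Real.exp (n * R)⌉₊ ≤ 1 := Nat.ceil_le.2 (by simpa using hR)
    refine (minErr_le_errProb hW (fun _ _ => Classical.arbitrary X) fun _ => ⟨0, hpos⟩).trans ?_
    rwa [errProb_eq_zero_of_le_one W hM]
  · have hM := Nat.ceil_lt_add_one (Real.exp_pos (n * R)).le
    obtain ⟨enc, dec, herr⟩ := h _ hpos (by linarith [Real.one_lt_exp_iff.2 hR])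
    exact (minErr_le_errProb hW enc dec).trans herr

lemma tendsto_exp_sub_sqrt_mul (c : ℝ) {δ : ℝ} (hδ : 0 < δ) :
    Tendsto (fun N : ℕ => Real.exp (c - √N * δ)) atTop (nhds 0) := by
  have hsqrt : Tendsto (fun N : ℕ => √N * δ) atTop atTop :=
    (Real.tendsto_sqrt_atTop.comp tendsto_natCast_atTop_atTop).atTop_mul_const hδ
  refine Real.tendsto_exp_atBot.comp ?_
  simp only [sub_eq_add_neg]
  exact tendsto_atBot_add_const_left _ c (tendsto_neg_atTop_atBot.comp hsqrt)

lemma sqrt_Vmin_div_Vmax_le_one (hW : IsChannel W) (hV : 0 < Vmin W) : √(Vmin W / Vmax W) ≤ 1 := by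
  have hle := Vmin_le_Vmax hW hV
  rw [Real.sqrt_le_one]
  exact div_le_one_of_le₀ hle (hV.le.trans hle)

lemma sqrt_Vmin_div_Vmax_lt_one (hW : IsChannel W) (hV : 0 < Vmin W) (hne : Vmin W ≠ Vmax W) :
    √(Vmin W / Vmax W) < 1 := by
  have hlt := (Vmin_le_Vmax hW hV).lt_of_ne hne
  rw [Real.sqrt_lt' one_pos, one_pow]
  exact (div_lt_one (hV.trans hlt)).2 hlt

-- The threshold `√2 * u` is relative to one half-block of length `N`, so that the two phases
-- together have rate `C + √Vmin * u / √(2 * N)`.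
lemma eventually_exists_code_add_self (hW : IsChannel W) (hV : 0 < Vmin W) {ε u : ℝ} (hu : u ≤ 0)
    (hgap : gcdf u - switchGain (√(Vmin W / Vmax W)) u < ε) (c : ℝ) {δ : ℝ} (hδ : 0 < δ) :
    ∀ᶠ N : ℕ in atTop, ∀ M : ℕ, 0 < M →
      (M : ℝ) ≤ 2 * Real.exp (2 * N * capacity W + √(Vmin W) * √N * (√2 * u) + (c - √N * δ)) →
      ∃ (enc : Fin M → List Y → X) (dec : (Fin (N + N) → Y) → Fin M),
        errProb W (N + N) M enc dec ≤ ε := by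
  have hne := capacityAchievers_nonempty_of_Vmin_pos hV
  have hV' := hV.trans_le (Vmin_le_Vmax hW hV)
  obtain ⟨⟨P, hP, hPV⟩, -⟩ := isLeast_Vmin hW hne
  obtain ⟨⟨P', hP', hPV'⟩, -⟩ := isGreatest_Vmax hW hne
  have hint := integral_switchErr_le (Real.sqrt_nonneg _) (sqrt_Vmin_div_Vmax_le_one hW hV) hu
  have hlim := (IsDist.tendsto_sum_switchErr (hP.1.joint hW)
    (sum_joint_mul_scaledDensity hW hP _) (sum_joint_mul_scaledDensity_sq hW hP hV hPV)
    (hP'.1.joint hW)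
    (sum_joint_mul_scaledDensity hW hP' _) (sum_joint_mul_scaledDensity_sq hW hP' hV' hPV')
    √(Vmin W / Vmax W) (√2 * u)).add ((tendsto_exp_sub_sqrt_mul c hδ).const_mul 2)
  rw [mul_zero, add_zero] at hlim
  filter_upwards [hlim.eventually_lt_const (hint.trans_lt hgap), eventually_gt_atTop 0]
    with N herr hN M hM hMle
  obtain ⟨enc, dec, hcode⟩ := exists_code_errProb_le_switchErr hW hP.1 hP'.1
    (outDist_eq_qStar hW hP) (outDist_eq_qStar hW hP') (capacity W) (√2 * u)
    (Real.sqrt_pos.2 hV) (Real.sqrt_pos.2 hV') hN hM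
  rw [← Real.sqrt_div hV.le] at hcode
  refine ⟨enc, dec, hcode.trans (le_trans (add_le_add_right ?_ _) herr.le)⟩
  rwa [Real.exp_neg, ← div_eq_mul_inv, div_le_iff₀ (Real.exp_pos _), mul_assoc, ← Real.exp_add,
    add_comm (c - _)]

lemma exists_code_of_half {X : Type*} {W : X → Y → ℝ} (hW : IsChannel W) {n M : ℕ} {ε : ℝ}
    (h : ∃ (enc : Fin M → List Y → X) (dec : (Fin (n / 2 + n / 2) → Y) → Fin M),
      errProb W (n / 2 + n / 2) M enc dec ≤ ε) :
    ∃ (enc : Fin M → List Y → X) (dec : (Fin n → Y) → Fin M), errProb W n M enc dec ≤ ε := by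
  rcases Nat.even_or_odd n with hn | hn
  · rwa [← two_mul, Nat.two_mul_div_two_of_even hn] at h
  · obtain ⟨enc, dec, herr⟩ := h
    obtain ⟨dec', hdec'⟩ := exists_errProb_succ_eq hW enc dec
    have hsucc : ∃ (enc : Fin M → List Y → X) (dec : (Fin (n / 2 + n / 2 + 1) → Y) → Fin M),
        errProb W (n / 2 + n / 2 + 1) M enc dec ≤ ε := ⟨enc, dec', hdec'.trans_le herr⟩
    rwa [← two_mul, Nat.two_mul_div_two_add_one_of_odd hn] at hsucc

lemma rate_le_half_rate (n : ℕ) (C : ℝ) {v δ : ℝ} (hv : v ≤ 0) (hδ : 0 ≤ δ) :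
    n * C + √n * (v - δ) ≤
      2 * (n / 2 : ℕ) * C + √(n / 2 : ℕ) * (√2 * v) + (|C| - √(n / 2 : ℕ) * δ) := by
  have hnle : (2 * (n / 2 : ℕ) : ℝ) ≤ n := by exact_mod_cast Nat.mul_div_le n 2
  have hnge : (n : ℝ) ≤ 2 * (n / 2 : ℕ) + 1 := by
    exact_mod_cast (by omega : n ≤ 2 * (n / 2) + 1)
  have hC : n * C ≤ 2 * (n / 2 : ℕ) * C + |C| := by
    nlinarith [le_abs_self C, neg_abs_le C, abs_nonneg C]
  have hv' : √n * v ≤ √2 * √(n / 2 : ℕ) * v := by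
    refine mul_le_mul_of_nonpos_right ?_ hv
    rw [← Real.sqrt_mul zero_le_two]
    exact Real.sqrt_le_sqrt hnle
  have hδ' : √(n / 2 : ℕ) * δ ≤ √n * δ := by
    refine mul_le_mul_of_nonneg_right (Real.sqrt_le_sqrt ?_) hδ
    exact_mod_cast Nat.div_le_self n 2
  linarith

lemma eventually_exists_code (hW : IsChannel W) (hV : 0 < Vmin W) {ε u : ℝ} (hu : u ≤ 0)
    (hgap : gcdf u - switchGain (√(Vmin W / Vmax W)) u < ε) {δ : ℝ} (hδ : 0 < δ) :
    ∀ᶠ n : ℕ in atTop, ∀ M : ℕ, 0 < M →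
      (M : ℝ) ≤ 2 * Real.exp (n * capacity W + √n * (√(Vmin W) * u - δ)) →
      ∃ (enc : Fin M → List Y → X) (dec : (Fin n → Y) → Fin M), errProb W n M enc dec ≤ ε := by
  have hhalf : Tendsto (fun n : ℕ => n / 2) atTop atTop :=
    Nat.tendsto_div_const_atTop two_ne_zero
  filter_upwards [hhalf.eventually
    (eventually_exists_code_add_self hW hV hu hgap |capacity W| hδ)] with n hcode M hM hMle
  refine exists_code_of_half hW (hcode M hM (hMle.trans ?_))
  refine mul_le_mul_of_nonneg_left (Real.exp_le_exp.2 ?_) zero_le_two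
  refine (rate_le_half_rate n _ (mul_nonpos_of_nonneg_of_nonpos (Real.sqrt_nonneg _) hu)
    hδ.le).trans_eq ?_
  ring

theorem eventually_sub_le_SOfb (hW : IsChannel W) (hV : 0 < Vmin W) {ε u : ℝ} (hε0 : 0 ≤ ε)
    (hε1 : ε < 1) (hu : u ≤ 0) (hgap : gcdf u - switchGain (√(Vmin W / Vmax W)) u < ε) {δ : ℝ}
    (hδ : 0 < δ) : ∀ᶠ n : ℕ in atTop, √(Vmin W) * u - δ ≤ SOfb W ε n := by
  obtain ⟨P, hP⟩ := capacityAchievers_nonempty_of_Vmin_pos hV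
  have : Nonempty X := hP.1.nonempty
  filter_upwards [eventually_exists_code hW hV hu hgap hδ, eventually_gt_atTop 0] with n hcode hn
  refine le_SOfb hW hn hε1 (minErr_le_of_forall hW hε0 ?_)
  rwa [mul_add_div_sqrt]

end SecondOrder

end

/-- Theorem 1 (Coarse achievability for compound-dispersion channels). -/
theorem coarse_achievability_compound_dispersion
    {X Y : Type*} [Fintype X] [Fintype Y]
    (W : X → Y → ℝ) (hW : IsChannel W) (hcol : NoZeroColumn W)
    (ε : ℝ) (hε0 : 0 < ε) (hε1 : ε < 0.5)
    (hVmin : 0 < Vmin W) (hcompound : Vmin W ≠ Vmax W)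
    (β : ℝ) (hβ : β = Real.sqrt (Vmin W / Vmax W))
    (f : ℝ → ℝ)
    (hf : ∀ α : ℝ, f α =
      ε * (α - 1) - (1 - β) * gpdf (2 * Real.sqrt 2 * gcdfInv (α * ε)) *
        ((Real.sqrt (2 * Real.pi))⁻¹ - gpdf (Real.sqrt 2 * gcdfInv (α * ε)))) :
    β < 1 ∧
    (∃ α : ℝ, 1 < α ∧ α < 1 / (2 * ε) ∧ f α < 0) ∧
    (∀ α : ℝ, 1 < α → α < 1 / (2 * ε) → f α < 0 →
      Filter.liminf (fun n : ℕ =>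
          (Real.log (Mfb W n ε) - n * capacity W) / Real.sqrt n) Filter.atTop ≥
        Real.sqrt (Veps W ε) * gcdfInv (α * ε) ∧
      Real.sqrt (Veps W ε) * gcdfInv (α * ε) > Real.sqrt (Veps W ε) * gcdfInv ε) := by
  have hε : ε < 1 / 2 := by linarith
  have hf' : ∀ α, f α = α * ε - switchGain β (gcdfInv (α * ε)) - ε := fun α => by
    rw [hf, switchGain]
    ring
  have hβ1 : β < 1 := hβ.trans_lt (sqrt_Vmin_div_Vmax_lt_one hW hVmin hcompound)
  have hσ : 0 < √(Vmin W) := Real.sqrt_pos.2 hVmin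
  refine ⟨hβ1, ?_, fun α hα1 hα2 hα => ?_⟩
  · obtain ⟨q, hεq, hq, hgain⟩ := exists_sub_switchGain_lt hβ1 hε0 hε
    refine ⟨q / ε, (one_lt_div hε0).2 hεq, ?_, ?_⟩
    · rw [← div_div]
      exact div_lt_div_of_pos_right hq hε0
    · rwa [hf', div_mul_cancel₀ q hε0.ne', sub_neg]
  · have hlow : ε < α * ε := lt_mul_of_one_lt_left hε0 hα1
    have hhigh : α * ε < 1 / 2 := by
      rwa [← div_div, lt_div_iff₀ hε0] at hα2
    have hu : gcdfInv (α * ε) < 0 := gcdfInv_neg (hε0.trans hlow) hhigh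
    rw [hf', sub_neg, hβ] at hα
    rw [Veps, if_pos hε]
    refine ⟨le_liminf_of_forall_sub_le (mul_neg_of_pos_of_neg hσ hu).le fun δ hδ =>
      eventually_sub_le_SOfb hW hVmin hε0.le (by linarith) hu.le ?_ hδ,
      mul_lt_mul_of_pos_left (gcdfInv_lt_gcdfInv hε0 hlow (by linarith)) hσ⟩
    rwa [gcdf_gcdfInv (hε0.trans hlow) (by linarith)]

end Paper
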